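/- arXiv:2510.01466 — 2 statements merged into one kernel-verified Lean document; each statement's English description precedes it below -/
import Mathlib

section
/- Fix integers t ≥ 1 and Δ ≥ 3 and let r = 2·vol(Δ, 2t) where vol(Δ, t) = 1 + Δ·((Δ−1)^t − 1)/(Δ−2). If λ ∈ ℂ satisfies Re λ ≥ 0 and λ^s ∈ R(2^{Δr}) for every integer 1 ≤ s ≤ r, then for every finite S_{t,t,t}-free simple graph G of maximum degree at most Δ, the univariate independence polynomial satisfies Z_{G,λ} ≠ 0. -/
attribute [local instance] Classical.propDecidable

/-- Multivariate independence polynomial of the induced subgraph `G[W]`: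
the sum over all independent sets `S ⊆ W` of `∏ v ∈ S, lam v`. -/
noncomputable def indepPolyOn {V : Type*} [Fintype V] (G : SimpleGraph V)
    (lam : V → ℂ) (W : Finset V) : ℂ :=
  ∑ S ∈ W.powerset, if (∀ u ∈ S, ∀ v ∈ S, ¬ G.Adj u v) then ∏ v ∈ S, lam v else 0

/-- Multivariate independence polynomial `Z_{G,λ}`. -/
noncomputable def indepPoly {V : Type*} [Fintype V] (G : SimpleGraph V)
    (lam : V → ℂ) : ℂ :=
  indepPolyOn G lam Finset.univ

/-- The subdivided claw `S_{t,t,t}`: three paths of length `t` sharing one common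
endpoint (the vertex `none`). -/
def subdividedClaw (t : ℕ) : SimpleGraph (Option (Fin 3 × Fin t)) :=
  SimpleGraph.fromRel (fun a b =>
    match a, b with
    | none, some (_, j) => (j : ℕ) = 0
    | some (i, j), some (i', j') => i = i' ∧ (j : ℕ) + 1 = (j' : ℕ)
    | _, _ => False)

/-- The open parabolic region `R(k) = {z : (Im z)² < (1/k)·Re z + 1/(4k²)}`. -/
def parabR (k : ℝ) : Set ℂ := {z : ℂ | z.im ^ 2 < z.re / k + 1 / (4 * k ^ 2)}

/-- The closed halfplane `H(t) = {z : Re z ≥ t}`. -/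
def halfH (t : ℝ) : Set ℂ := {z : ℂ | t ≤ z.re}


/-- The boundary `∂X` of a set of vertices: the vertices outside `X` that have a
neighbour in `X`, with the special convention `∂∅ = {u}` for the root `u`. -/
noncomputable def bdry {V : Type*} [Fintype V] (G : SimpleGraph V) (u : V)
    (X : Finset V) : Finset V :=
  if X = ∅ then {u}
  else Finset.univ.filter (fun v => v ∉ X ∧ ∃ x ∈ X, G.Adj v x)

/-- Admissible pairs `(L, U)` with respect to a graph `G` and root vertex `u`. -/
inductive Admissible {V : Type*} [Fintype V] (G : SimpleGraph V) (u : V) :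
    Finset V → Finset V → Prop
  | base : Admissible G u ∅ Finset.univ
  | root : Admissible G u {u} (Finset.univ \ {u})
  | step (L' U' L : Finset V) :
      Admissible G u L' U' →
      L.Nonempty →
      L ⊆ bdry G u L' ∩ U' →
      (∀ a ∈ L, ∀ b ∈ L, ¬ G.Adj a b) →
      Admissible G u L (U' \ bdry G u L')

/-- `vol(Δ, t) = 1 + Δ·((Δ−1)^t − 1)/(Δ−2)`. -/
noncomputable def vol (Δ t : ℕ) : ℝ :=
  1 + (Δ : ℝ) * (((Δ : ℝ) - 1) ^ t - 1) / ((Δ : ℝ) - 2)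

/-!
Write `Z W` for the independence polynomial of `G[W]`. Splitting the independent sets of `W`
according to their trace `A` on `T ⊆ W` gives
`Z W / Z (W \ T) = ∑ A, (∏ v ∈ A, lam v) / (Z (W \ T) / Z (W \ (T ∪ N(A))))`.
If each denominator has real part at least `1/2` and each numerator with `A ≠ ∅` lies in `R(k)`,
then each such summand has real part at least `-1/(2k)`; there are at most `2 ^ #T` of them, so for
`2 ^ #T ≤ k` the left-hand side again has real part at least `1/2`. Taking `T` to be the part of
`∂L` in `W` turns this into a recursion over the admissible pairs `(L, U)` which shows `Z W ≠ 0`.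

It remains to bound `L`. The sets met on the way to `(L, U)` are the levels of a layering with
root `u`. If `L` exceeds twice the size of a ball of radius `2t`, it contains three vertices at
pairwise distance greater than `2t`. Paths descending from them reach the root, so going down from
`L` there is a first level on which one vertex sees two of the paths. Above it the paths are
anticomplete and longer than `t`; whichever further adjacencies hold at that level, they extend to
an induced `S_{t,t,t}`.
-/

open Finset

section Ball

/-- The number of vertices within distance `n` of a vertex of the infinite `Δ`-regular tree:
the natural number whose closed form is `vol Δ n`. -/
def ballBound (Δ n : ℕ) : ℕ :=
  1 + Δ * ∑ k ∈ range n, (Δ - 1) ^ k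

theorem cast_ballBound {Δ : ℕ} (hΔ : 3 ≤ Δ) (n : ℕ) : (ballBound Δ n : ℝ) = vol Δ n := by
  have h3 : (3 : ℝ) ≤ Δ := by exact_mod_cast hΔ
  have hsub : ((Δ - 1 : ℕ) : ℝ) = Δ - 1 := by
    rw [Nat.cast_sub (by lia), Nat.cast_one]
  simp only [ballBound, vol, Nat.cast_add, Nat.cast_one, Nat.cast_mul, Nat.cast_sum, Nat.cast_pow,
    hsub]
  rw [geom_sum_eq (by linarith), mul_div_assoc, show (Δ : ℝ) - 1 - 1 = Δ - 2 by ring]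

variable {V : Type*} {G : SimpleGraph V} {Δ : ℕ}

theorem exists_adj_edist_eq {a v : V} {n : ℕ} (hv : G.edist a v = (n + 1 : ℕ)) :
    ∃ x, G.Adj x v ∧ G.edist a x = n := by
  obtain ⟨p, hp⟩ := G.exists_walk_of_edist_eq_coe hv
  have hadj : G.Adj p.penultimate v :=
    p.adj_penultimate (SimpleGraph.Walk.not_nil_iff_lt_length.2 (by lia))
  refine ⟨p.penultimate, hadj, le_antisymm ?_ ?_⟩
  · have hlen : p.dropLast.length = n := by simp [hp]
    exact hlen ▸ SimpleGraph.edist_le p.dropLast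
  · have htri : G.edist a v ≤ G.edist a p.penultimate + 1 :=
      SimpleGraph.edist_eq_one_iff_adj.2 hadj ▸ SimpleGraph.edist_triangle
    rw [hv, Nat.cast_succ] at htri
    exact (ENat.add_le_add_iff_right ENat.one_ne_top).1 htri

variable [Fintype V]

theorem card_sphere_le (hdeg : ∀ v, G.degree v ≤ Δ) (a : V) (n : ℕ) :
    #{v | G.edist a v = (n + 1 : ℕ)} ≤ Δ * (Δ - 1) ^ n := by
  induction n with
  | zero =>
    have hsub : ({v | G.edist a v = (0 + 1 : ℕ)} : Finset V) ⊆ G.neighborFinset a := by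
      intro v hv
      simpa using hv
    simpa using (card_le_card hsub).trans ((G.card_neighborFinset_eq_degree a).trans_le (hdeg a))
  | succ n ih =>
    have hsub : ({v | G.edist a v = (n + 1 + 1 : ℕ)} : Finset V) ⊆
        ({x | G.edist a x = (n + 1 : ℕ)} : Finset V).biUnion
          fun x => {v ∈ G.neighborFinset x | G.edist a v = (n + 1 + 1 : ℕ)} := by
      intro v hv
      obtain ⟨x, hxv, hx⟩ := exists_adj_edist_eq (mem_filter_univ v |>.1 hv)
      simp only [mem_biUnion, mem_filter, mem_univ, true_and, SimpleGraph.mem_neighborFinset]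
      exact ⟨x, hx, hxv, mem_filter_univ v |>.1 hv⟩
    have hforward : ∀ x ∈ ({x | G.edist a x = (n + 1 : ℕ)} : Finset V),
        #{v ∈ G.neighborFinset x | G.edist a v = (n + 1 + 1 : ℕ)} ≤ Δ - 1 := by
      intro x hx
      obtain ⟨y, hyx, hy⟩ := exists_adj_edist_eq (mem_filter_univ x |>.1 hx)
      have hlt : #{v ∈ G.neighborFinset x | G.edist a v = (n + 1 + 1 : ℕ)} <
          #(G.neighborFinset x) := by
        refine card_lt_card (filter_ssubset.2 ⟨y, by simpa using hyx.symm, ?_⟩)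
        rw [hy, Nat.cast_inj]
        lia
      have hcard := hdeg x
      rw [← G.card_neighborFinset_eq_degree] at hcard
      lia
    calc #{v | G.edist a v = (n + 1 + 1 : ℕ)}
        ≤ #{x | G.edist a x = (n + 1 : ℕ)} * (Δ - 1) :=
          (card_le_card hsub).trans (card_biUnion_le_card_mul _ _ _ hforward)
      _ ≤ Δ * (Δ - 1) ^ n * (Δ - 1) := Nat.mul_le_mul_right _ ih
      _ = Δ * (Δ - 1) ^ (n + 1) := by ring

theorem card_closedBall_le (hdeg : ∀ v, G.degree v ≤ Δ) (a : V) (n : ℕ) :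
    #{v | G.edist a v ≤ n} ≤ ballBound Δ n := by
  induction n with
  | zero => simp [ballBound, filter_eq]
  | succ n ih =>
    have hsub : ({v | G.edist a v ≤ (n + 1 : ℕ)} : Finset V) ⊆
        ({v | G.edist a v ≤ n} : Finset V) ∪ ({v | G.edist a v = (n + 1 : ℕ)} : Finset V) := by
      intro v hv
      simp only [mem_union, mem_filter_univ] at hv ⊢
      rcases hv.lt_or_eq with hlt | heq
      · exact .inl (Order.lt_add_one_iff_of_not_isMax (by simp) |>.1 (by simpa using hlt))
      · exact .inr heq
    calc #{v | G.edist a v ≤ (n + 1 : ℕ)}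
        ≤ #{v | G.edist a v ≤ n} + #{v | G.edist a v = (n + 1 : ℕ)} :=
          (card_le_card hsub).trans (card_union_le _ _)
      _ ≤ ballBound Δ n + Δ * (Δ - 1) ^ n := add_le_add ih (card_sphere_le hdeg a n)
      _ = ballBound Δ (n + 1) := by
          simp only [ballBound, sum_range_succ]
          ring

theorem exists_three_far {L : Finset V} {n : ℕ} (hdeg : ∀ v, G.degree v ≤ Δ)
    (hL : 2 * ballBound Δ n < #L) :
    ∃ p : Fin 3 → V, (∀ j, p j ∈ L) ∧ Pairwise fun j k => n < G.edist (p j) (p k) := by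
  have pick (B : Finset V) (hB : #B < #L) : ∃ a ∈ L, a ∉ B := exists_mem_notMem_of_card_lt_card hB
  have hball (a : V) := card_closedBall_le hdeg a n
  obtain ⟨a, ha, -⟩ := pick ∅ (by rw [card_empty]; lia)
  obtain ⟨b, hb, hab⟩ := pick {v | G.edist a v ≤ n} ((hball a).trans_lt (by lia))
  obtain ⟨c, hc, habc⟩ := pick
    (({v | G.edist a v ≤ n} : Finset V) ∪ ({v | G.edist b v ≤ n} : Finset V))
    ((card_union_le _ _).trans_lt (by have := hball a; have := hball b; lia))
  simp only [mem_union, mem_filter_univ, not_or, not_le] at hab habc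
  refine ⟨![a, b, c], by simp [Fin.forall_fin_succ, ha, hb, hc], ?_⟩
  intro j k hjk
  fin_cases j <;> fin_cases k <;> simp_all [SimpleGraph.edist_comm]

end Ball

section Claw

variable {V : Type*} {G : SimpleGraph V}

/-- Two sets of vertices are anticomplete if they are disjoint and no edge joins them; distinct
legs of an induced subdivided claw are anticomplete. -/
def IsAnticomplete (G : SimpleGraph V) (A B : Set V) : Prop :=
  ∀ a ∈ A, ∀ b ∈ B, a ≠ b ∧ ¬G.Adj a b

theorem IsAnticomplete.symm {A B : Set V} (h : IsAnticomplete G A B) : IsAnticomplete G B A :=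
  fun b hb a ha => ⟨(h a ha b hb).1.symm, fun hba => (h a ha b hb).2 hba.symm⟩

theorem IsAnticomplete.mono {A A' B B' : Set V} (h : IsAnticomplete G A B) (hA : A' ⊆ A)
    (hB : B' ⊆ B) : IsAnticomplete G A' B' :=
  fun a ha b hb => h a (hA ha) b (hB hb)

theorem IsAnticomplete.union_left {A A' B : Set V} (h : IsAnticomplete G A B)
    (h' : IsAnticomplete G A' B) : IsAnticomplete G (A ∪ A') B :=
  fun a ha => ha.elim (h a) (h' a)

theorem IsAnticomplete.insert_left {a : V} {A B : Set V} (ha : IsAnticomplete G {a} B)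
    (hA : IsAnticomplete G A B) : IsAnticomplete G (insert a A) B :=
  ha.union_left hA

/-- An induced path with `t` edges that starts at `x` and otherwise stays in `A`: a leg of a
subdivided claw with centre `x`. -/
def HasLeg (G : SimpleGraph V) (t : ℕ) (x : V) (A : Set V) : Prop :=
  ∃ f : SimpleGraph.pathGraph (t + 1) ↪g G, f 0 = x ∧ ∀ j : Fin t, f j.succ ∈ A

namespace HasLeg

theorem mono {s t : ℕ} {x : V} {A B : Set V} (h : HasLeg G t x A) (hst : s ≤ t) (hAB : A ⊆ B) :
    HasLeg G s x B := by
  obtain ⟨f, hf0, hfA⟩ := h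
  let trim : SimpleGraph.pathGraph (s + 1) ↪g SimpleGraph.pathGraph (t + 1) :=
    ⟨(Fin.castLEEmb (by lia)), by simp [SimpleGraph.pathGraph_adj]⟩
  exact ⟨trim.trans f, hf0, fun j => hAB (hfA (j.castLE hst))⟩

theorem zero (x : V) (A : Set V) : HasLeg G 0 x A :=
  ⟨⟨⟨fun _ => x, fun _ _ _ => by lia⟩, by simp [SimpleGraph.pathGraph_adj]⟩, rfl,
    fun j => j.elim0⟩

theorem cons {n : ℕ} {x y : V} {A : Set V} (h : HasLeg G n x A) (hyx : G.Adj y x)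
    (hy : IsAnticomplete G {y} A) : HasLeg G (n + 1) y (insert x A) := by
  obtain ⟨f, rfl, hfA⟩ := h
  have hne : ∀ j, y ≠ f j := Fin.cases hyx.ne fun j => (hy y rfl _ (hfA j)).1
  have hadj : ∀ j, G.Adj y (f j) ↔ j = 0 :=
    Fin.cases (by simp [hyx]) fun j => by simp [(hy y rfl _ (hfA j)).2]
  let g : Fin (n + 2) → V := Fin.cons y f
  have hg : Function.Injective g := Fin.cons_injective_iff.2
    ⟨by rintro ⟨j, hj⟩; exact hne j hj.symm, f.injective⟩
  have hgadj : ∀ a b, G.Adj (g a) (g b) ↔ (SimpleGraph.pathGraph (n + 2)).Adj a b := by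
    intro a b
    cases a using Fin.cases <;> cases b using Fin.cases <;>
      simp only [g, Fin.cons_zero, Fin.cons_succ, hadj, G.adj_comm _ y, f.map_adj_iff,
        SimpleGraph.pathGraph_adj, G.irrefl, Fin.ext_iff, Fin.val_succ, Fin.val_zero] <;> lia
  exact ⟨⟨⟨g, hg⟩, hgadj _ _⟩, rfl, Fin.cases (.inl rfl) fun j => .inr (hfA j)⟩

theorem of_le_dist {S : Set V} {x y : S} {n : ℕ} (hxy : (G.induce S).Reachable x y)
    (hn : n ≤ (G.induce S).dist x y) : HasLeg G n x (S \ {↑x}) := by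
  obtain ⟨p, hp⟩ := hxy.exists_walk_length_eq_dist
  have hdist (a : Fin (n + 1)) : (G.induce S).dist x (p.getVert a) = a := by
    rw [← SimpleGraph.length_eq_dist_of_subwalk hp (p.isSubwalk_take a)]
    rw [SimpleGraph.Walk.take_length]
    lia
  have hinj : Function.Injective fun a : Fin (n + 1) => p.getVert a := fun a b hab =>
    Fin.ext (by rw [← hdist a, ← hdist b]; exact congrArg _ hab)
  have hadj (a b : Fin (n + 1)) : (G.induce S).Adj (p.getVert a) (p.getVert b) ↔
      (SimpleGraph.pathGraph (n + 1)).Adj a b := by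
    rw [SimpleGraph.pathGraph_adj]
    constructor
    · intro h
      have hne : a ≠ b := fun hab => h.ne (congrArg (fun a : Fin (n + 1) => p.getVert a) hab)
      have := h.diff_dist_adj (u := x)
      rw [hdist, hdist] at this
      lia
    · rintro (h | h)
      · exact h ▸ p.adj_getVert_succ (by lia)
      · exact (h ▸ p.adj_getVert_succ (by lia)).symm
  let f : SimpleGraph.pathGraph (n + 1) ↪g G :=
    .trans ⟨⟨_, hinj⟩, hadj _ _⟩ (SimpleGraph.Embedding.induce S)
  have hf0 : f 0 = x := congrArg Subtype.val p.getVert_zero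
  refine ⟨f, hf0, fun j => ⟨Subtype.property _, fun hj => ?_⟩⟩
  exact j.succ_ne_zero (f.injective (hj.trans hf0.symm))

end HasLeg

theorem subdividedClaw_adj_none_some {t : ℕ} (i : Fin 3) (j : Fin t) :
    (subdividedClaw t).Adj none (some (i, j)) ↔ (j : ℕ) = 0 := by
  simp [subdividedClaw]

theorem subdividedClaw_adj_some_some {t : ℕ} (i i' : Fin 3) (j j' : Fin t) :
    (subdividedClaw t).Adj (some (i, j)) (some (i', j')) ↔
      i = i' ∧ ((j : ℕ) + 1 = j' ∨ (j' : ℕ) + 1 = j) := by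
  simp only [subdividedClaw, SimpleGraph.fromRel_adj, ne_eq, Option.some_inj, Prod.mk.injEq]
  lia

theorem nonempty_subdividedClaw_embedding {t : ℕ} {x : V} {A : Fin 3 → Set V}
    (hA : ∀ i, HasLeg G t x (A i)) (hAA : Pairwise fun i i' => IsAnticomplete G (A i) (A i')) :
    Nonempty (subdividedClaw t ↪g G) := by
  choose f hf0 hfA using hA
  have hinj_none (i : Fin 3) (j : Fin t) : x ≠ f i j.succ :=
    fun h => j.succ_ne_zero ((f i).injective (h ▸ hf0 i).symm)
  let g : Option (Fin 3 × Fin t) → V := fun a => a.elim x fun ij => f ij.1 ij.2.succ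
  have hinj : Function.Injective g := by
    rintro (_ | ⟨i, j⟩) (_ | ⟨i', j'⟩) h
    · rfl
    · exact absurd h (hinj_none i' j')
    · exact absurd h.symm (hinj_none i j)
    · obtain rfl | hi := eq_or_ne i i'
      · exact congrArg (fun j => some (i, j)) (Fin.succ_injective _ ((f i).injective h))
      · exact absurd h (hAA hi _ (hfA i j) _ (hfA i' j')).1
  have hadj_none (i : Fin 3) (j : Fin t) :
      G.Adj x (f i j.succ) ↔ (subdividedClaw t).Adj none (some (i, j)) := by
    rw [← hf0 i, (f i).map_adj_iff, subdividedClaw_adj_none_some, SimpleGraph.pathGraph_adj]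
    simp
  have hadj (a b) : G.Adj (g a) (g b) ↔ (subdividedClaw t).Adj a b := by
    rcases a with _ | ⟨i, j⟩ <;> rcases b with _ | ⟨i', j'⟩
    · simp
    · exact hadj_none i' j'
    · rw [G.adj_comm, (subdividedClaw t).adj_comm]
      exact hadj_none i j
    · rw [subdividedClaw_adj_some_some]
      obtain rfl | hi := eq_or_ne i i'
      · simp [g, SimpleGraph.pathGraph_adj]
      · simp [g, hi, (hAA hi _ (hfA i j) _ (hfA i' j')).2]
  exact ⟨⟨⟨g, hinj⟩, hadj _ _⟩⟩

end Claw

section Layering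

variable {V : Type*} {G : SimpleGraph V}

/-- A layering of part of a graph by levels `ℓ`, as produced by a breadth-first exploration from
`u` that may discard vertices along the way: `ℓ v = ⊤` for the vertices outside the layered part,
each level is independent, edges of the layered part join consecutive levels, and every vertex of
positive level has a neighbour one level below. -/
structure IsLayering (G : SimpleGraph V) (u : V) (ℓ : V → ℕ∞) : Prop where
  eq_root {v : V} : ℓ v = 0 → v = u
  exists_pred {v : V} {m : ℕ} : ℓ v = (m + 1 : ℕ) → ∃ w, G.Adj w v ∧ ℓ w = m
  succ_eq_or_of_adj {v w : V} {j k : ℕ} :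
    G.Adj v w → ℓ v = j → ℓ w = k → j + 1 = k ∨ k + 1 = j

/-- A path `p 0, …, p i` that climbs one level at each step. -/
structure IsAscending (G : SimpleGraph V) (ℓ : V → ℕ∞) (i : ℕ) (p : ℕ → V) : Prop where
  level {m : ℕ} : m ≤ i → ℓ (p m) = m
  adj {m : ℕ} : m < i → G.Adj (p m) (p (m + 1))

theorem IsAscending.edist_le {ℓ : V → ℕ∞} {i : ℕ} {p : ℕ → V} (hp : IsAscending G ℓ i p)
    {a n : ℕ} (h : a + n ≤ i) : G.edist (p a) (p (a + n)) ≤ n := by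
  induction n with
  | zero => simp
  | succ n ih =>
    calc G.edist (p a) (p (a + (n + 1)))
        ≤ G.edist (p a) (p (a + n)) + G.edist (p (a + n)) (p (a + n + 1)) :=
          SimpleGraph.edist_triangle
      _ ≤ n + 1 := add_le_add (ih (by lia))
          (SimpleGraph.edist_eq_one_iff_adj.2 (hp.adj (by lia))).le
      _ = (n + 1 : ℕ) := by push_cast; rfl

namespace IsLayering

variable {u : V} {ℓ : V → ℕ∞} (hℓ : IsLayering G u ℓ)

include hℓ

theorem exists_isAscending {i : ℕ} {a : V} (ha : ℓ a = i) :
    ∃ p, IsAscending G ℓ i p ∧ p i = a := by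
  induction i generalizing a with
  | zero => exact ⟨fun _ => a, ⟨fun h => by simpa [Nat.le_zero.1 h] using ha, by lia⟩, rfl⟩
  | succ i ih =>
    obtain ⟨b, hba, hb⟩ := hℓ.exists_pred ha
    obtain ⟨p, hp, rfl⟩ := ih hb
    refine ⟨Function.update p (i + 1) a, ⟨fun {m} hm => ?_, fun {m} hm => ?_⟩, by simp⟩
    · obtain rfl | hlt := hm.eq_or_lt
      · simpa using ha
      · rw [Function.update_of_ne hlt.ne, hp.level (by lia)]
    · rw [Function.update_of_ne hm.ne]
      obtain rfl | hlt := (Nat.lt_succ_iff.1 hm).eq_or_lt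
      · simpa using hba
      · rw [Function.update_of_ne (by lia)]
        exact hp.adj hlt

theorem isAnticomplete_below {l i : ℕ} {p : ℕ → V} (hp : IsAscending G ℓ i p) :
    IsAnticomplete G {v | ℓ v < l} (p '' Set.Icc (l + 1) i) := by
  rintro a (ha : ℓ a < l) _ ⟨m, ⟨hlm, hmi⟩, rfl⟩
  obtain ⟨n, hn⟩ := ENat.ne_top_iff_exists.1 ha.ne_top
  rw [← hn, Nat.cast_lt] at ha
  have hm := hp.level hmi
  refine ⟨fun h => ?_, fun h => ?_⟩
  · rw [← h, ← hn, Nat.cast_inj] at hm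
    lia
  · have := hℓ.succ_eq_or_of_adj h hn.symm hm
    lia

theorem isAnticomplete_singleton {l i : ℕ} {y : V} {p : ℕ → V} (hp : IsAscending G ℓ i p)
    (hy : ℓ y = l) (hyp : ¬G.Adj y (p (l + 1))) :
    IsAnticomplete G {y} (p '' Set.Icc (l + 1) i) := by
  rintro _ rfl _ ⟨m, ⟨hlm, hmi⟩, rfl⟩
  have hm := hp.level hmi
  refine ⟨fun h => ?_, fun h => ?_⟩
  · rw [← h, hy, Nat.cast_inj] at hm
    lia
  · have := hℓ.succ_eq_or_of_adj h hy hm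
    obtain rfl : m = l + 1 := by lia
    exact hyp h

theorem hasLeg_cons {t l i : ℕ} {x : V} {p : ℕ → V} (hp : IsAscending G ℓ i p) (hx : ℓ x = l)
    (hxp : G.Adj x (p (l + 1))) (hi : l < i)
    (h : HasLeg G t (p (l + 1)) (p '' Set.Icc (l + 1 + 1) i)) :
    HasLeg G (t + 1) x (p '' Set.Icc (l + 1) i) := by
  have hx_top : IsAnticomplete G {x} (p '' Set.Icc (l + 1 + 1) i) :=
    (hℓ.isAnticomplete_below hp).mono (by simp [hx, ENat.natCast_lt_succ]) subset_rfl
  rw [← Set.insert_Icc_succ_left_eq_Icc (show l + 1 ≤ i from hi), Set.image_insert_eq]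
  exact h.cons hxp hx_top

theorem hasLeg_ascending {t l i : ℕ} {p : ℕ → V} (hp : IsAscending G ℓ i p) (hi : l + t ≤ i) :
    HasLeg G t (p l) (p '' Set.Icc (l + 1) i) := by
  induction t generalizing l with
  | zero => exact .zero _ _
  | succ t ih =>
    exact hℓ.hasLeg_cons hp (hp.level (by lia)) (hp.adj (by lia)) (by lia) (ih (by lia))

theorem hasLeg_of_adj {t l i : ℕ} {x : V} {p : ℕ → V} (hp : IsAscending G ℓ i p) (hx : ℓ x = l)
    (hxp : G.Adj x (p (l + 1))) (hi : l + t < i) : HasLeg G t x (p '' Set.Icc (l + 1) i) :=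
  (hℓ.hasLeg_cons hp hx hxp (by lia) (hℓ.hasLeg_ascending hp (by lia))).mono t.le_succ subset_rfl

theorem preconnected_induce {S : Set V} (hfin : ∀ v ∈ S, ℓ v ≠ ⊤)
    (hpred : ∀ v ∈ S, ∀ m : ℕ, ℓ v = (m + 1 : ℕ) → ∃ w ∈ S, G.Adj w v ∧ ℓ w = m) :
    (G.induce S).Preconnected := by
  have hroot (m : ℕ) (v : S) (hv : ℓ v = m) :
      ∃ w : S, (w : V) = u ∧ (G.induce S).Reachable v w := by
    induction m generalizing v with
    | zero => exact ⟨v, hℓ.eq_root hv, .refl v⟩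
    | succ m ih =>
      obtain ⟨w, hwS, hwv, hw⟩ := hpred v v.2 m hv
      obtain ⟨r, hr, hwr⟩ := ih ⟨w, hwS⟩ hw
      have hvw : (G.induce S).Adj v ⟨w, hwS⟩ := hwv.symm
      exact ⟨r, hr, hvw.reachable.trans hwr⟩
  intro v w
  obtain ⟨m, hm⟩ := ENat.ne_top_iff_exists.1 (hfin v v.2)
  obtain ⟨n, hn⟩ := ENat.ne_top_iff_exists.1 (hfin w w.2)
  obtain ⟨r, hr, hvr⟩ := hroot m v hm.symm
  obtain ⟨s, hs, hws⟩ := hroot n w hn.symm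
  obtain rfl : r = s := Subtype.ext (hr.trans hs.symm)
  exact hvr.trans hws.symm

theorem level_le_add_length {S : Set V} (hfin : ∀ v ∈ S, ℓ v ≠ ⊤) {x y : S}
    (p : (G.induce S).Walk x y) : ℓ y ≤ ℓ x + p.length := by
  induction p with
  | nil => simp
  | @cons a b c hab q ih =>
    obtain ⟨m, hm⟩ := ENat.ne_top_iff_exists.1 (hfin a a.2)
    obtain ⟨n, hn⟩ := ENat.ne_top_iff_exists.1 (hfin b b.2)
    have hmn := hℓ.succ_eq_or_of_adj hab hm.symm hn.symm
    have hstep : ℓ b ≤ ℓ a + 1 := by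
      rw [← hm, ← hn]
      exact_mod_cast (by lia : n ≤ m + 1)
    calc ℓ c ≤ ℓ b + q.length := ih
      _ ≤ ℓ a + 1 + q.length := by gcongr
      _ = ℓ a + (SimpleGraph.Walk.cons hab q).length := by
        rw [SimpleGraph.Walk.length_cons]
        push_cast
        ring

/-- The leg is the start of a shortest path from `x` to `p i` down through the layers below `x` and
then up along `p`; it is long because levels change by one along each edge. -/
theorem hasLeg_below {t l i : ℕ} {x : V} {p : ℕ → V} (hp : IsAscending G ℓ i p) (hx : ℓ x = l)
    (hi : l + t ≤ i) : HasLeg G t x ({v | ℓ v < l} ∪ p '' Set.Icc l i) := by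
  set S : Set V := insert x ({v | ℓ v < l} ∪ p '' Set.Icc l i) with hS
  have hfin : ∀ v ∈ S, ℓ v ≠ ⊤ := by
    rintro v (rfl | hv | ⟨m, hm, rfl⟩)
    · simp [hx]
    · exact (show ℓ v < l from hv).ne_top
    · simp [hp.level hm.2]
  have hlower {v w : V} {m : ℕ} (hv : ℓ v ≤ l) (hvm : ℓ v = (m + 1 : ℕ)) (hw : ℓ w = m) :
      w ∈ S := by
    refine .inr (.inl (?_ : ℓ w < l))
    rw [hvm, Nat.cast_le] at hv
    rw [hw, Nat.cast_lt]
    lia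
  have hpred : ∀ v ∈ S, ∀ m : ℕ, ℓ v = (m + 1 : ℕ) → ∃ w ∈ S, G.Adj w v ∧ ℓ w = m := by
    intro v hv m hvm
    obtain ⟨w, hwv, hw⟩ := hℓ.exists_pred hvm
    rcases hv with rfl | hv | ⟨n, ⟨hln, hni⟩, rfl⟩
    · exact ⟨w, hlower hx.le hvm hw, hwv, hw⟩
    · exact ⟨w, hlower (le_of_lt hv) hvm hw, hwv, hw⟩
    · obtain rfl : n = m + 1 := by exact_mod_cast (hp.level hni).symm.trans hvm
      obtain rfl | hlt := hln.eq_or_lt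
      · exact ⟨w, hlower (hp.level hni).le hvm hw, hwv, hw⟩
      · exact ⟨p m, .inr (.inr ⟨m, ⟨by lia, by lia⟩, rfl⟩), hp.adj hni, hp.level (by lia)⟩
  let a : S := ⟨x, .inl rfl⟩
  let b : S := ⟨p i, .inr (.inr ⟨i, ⟨by lia, le_rfl⟩, rfl⟩)⟩
  have hreach : (G.induce S).Reachable a b := hℓ.preconnected_induce hfin hpred a b
  obtain ⟨q, hq⟩ := hreach.exists_walk_length_eq_dist
  have hdist : t ≤ (G.induce S).dist a b := by
    have := hℓ.level_le_add_length hfin q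
    rw [show ℓ b = i from hp.level le_rfl, show ℓ a = l from hx] at this
    have : i ≤ l + q.length := by exact_mod_cast this
    lia
  exact (HasLeg.of_le_dist hreach hdist).mono le_rfl (by simp [a, hS])

end IsLayering

end Layering

section ThreePaths

variable {V : Type*} {G : SimpleGraph V}

theorem IsAnticomplete.pairwise_three {A B C : Set V} (hAB : IsAnticomplete G A B)
    (hAC : IsAnticomplete G A C) (hBC : IsAnticomplete G B C) :
    Pairwise fun i k => IsAnticomplete G (![A, B, C] i) (![A, B, C] k) := by
  intro i k hik
  fin_cases i <;> fin_cases k <;>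
    first | exact absurd rfl hik | assumption | exact IsAnticomplete.symm (by assumption)

/-- Some vertex of level `m` has neighbours on two of the three paths `p` one level above. -/
def HaveContact (G : SimpleGraph V) (ℓ : V → ℕ∞) (p : Fin 3 → ℕ → V) (m : ℕ) : Prop :=
  ∃ x, ℓ x = m ∧ ∃ j k, j ≠ k ∧ G.Adj x (p j (m + 1)) ∧ G.Adj x (p k (m + 1))

variable {u : V} {ℓ : V → ℕ∞} {l i t : ℕ} {p : Fin 3 → ℕ → V}

theorem HaveContact.exists_edist_le (hp : ∀ j, IsAscending G ℓ i (p j))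
    (h : HaveContact G ℓ p l) (hli : l < i) :
    ∃ j k, j ≠ k ∧ G.edist (p j i) (p k i) ≤ 2 * (i - l : ℕ) := by
  obtain ⟨x, -, j, k, hjk, hxj, hxk⟩ := h
  have hx {j} (hxj : G.Adj x (p j (l + 1))) : G.edist x (p j i) ≤ (i - l : ℕ) := by
    obtain ⟨n, rfl⟩ := Nat.exists_eq_add_of_lt hli
    calc G.edist x (p j (l + n + 1))
        ≤ G.edist x (p j (l + 1)) + G.edist (p j (l + 1)) (p j (l + n + 1)) :=
          SimpleGraph.edist_triangle
      _ ≤ 1 + n := by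
          rw [add_right_comm]
          exact add_le_add (SimpleGraph.edist_eq_one_iff_adj.2 hxj).le
            ((hp j).edist_le (by lia))
      _ = (l + n + 1 - l : ℕ) := by
          rw [show l + n + 1 - l = 1 + n by lia]
          push_cast
          rfl
  refine ⟨j, k, hjk, ?_⟩
  calc G.edist (p j i) (p k i)
      ≤ G.edist x (p j i) + G.edist x (p k i) := by
        rw [SimpleGraph.edist_comm (u := x) (v := p j i)]
        exact SimpleGraph.edist_triangle
    _ ≤ 2 * (i - l : ℕ) := by
        rw [two_mul]
        exact add_le_add (hx hxj) (hx hxk)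

namespace IsLayering

variable (hℓ : IsLayering G u ℓ) (hp : ∀ j, IsAscending G ℓ i (p j))

include hℓ hp

theorem haveContact_zero (hi : 0 < i) : HaveContact G ℓ p 0 := by
  have hroot (j : Fin 3) : p j 0 = u := hℓ.eq_root ((hp j).level hi.le)
  refine ⟨u, hroot 0 ▸ (hp 0).level hi.le, 0, 1, by decide, ?_, ?_⟩
  · exact hroot 0 ▸ (hp 0).adj hi
  · exact hroot 1 ▸ (hp 1).adj hi

theorem isAnticomplete_of_not_haveContact (hend : Function.Injective fun j => p j i)
    (hno : ∀ m, l < m → m < i → ¬HaveContact G ℓ p m) :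
    Pairwise fun j k => IsAnticomplete G (p j '' Set.Icc (l + 1) i) (p k '' Set.Icc (l + 1) i) := by
  have hnadj {j k m : _} (hjk : j ≠ k) (hlm : l < m) (hmi : m < i) :
      ¬G.Adj (p j m) (p k (m + 1)) := fun h =>
    hno m hlm hmi ⟨p j m, (hp j).level hmi.le, j, k, hjk, (hp j).adj hmi, h⟩
  rintro j k hjk _ ⟨a, ⟨hla, hai⟩, rfl⟩ _ ⟨b, ⟨hlb, hbi⟩, rfl⟩
  refine ⟨fun h => ?_, fun h => ?_⟩
  · have hab : a = b := by
      have := (hp j).level hai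
      rwa [h, (hp k).level hbi, Nat.cast_inj, eq_comm] at this
    subst hab
    obtain rfl | hlt := hai.eq_or_lt
    · exact hjk (hend h)
    · exact hnadj hjk hla hlt (h ▸ (hp k).adj hlt)
  · obtain rfl | rfl := hℓ.succ_eq_or_of_adj h ((hp j).level hai) ((hp k).level hbi)
    · exact hnadj hjk hla hbi h
    · exact hnadj hjk.symm hlb hai h.symm

variable (htails : Pairwise fun j k =>
  IsAnticomplete G (p j '' Set.Icc (l + 1) i) (p k '' Set.Icc (l + 1) i)) (hlt : l + t < i)

include htails hlt

theorem nonempty_claw_of_adj_three {x : V} (hx : ℓ x = l) (hxp : ∀ j, G.Adj x (p j (l + 1))) :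
    Nonempty (subdividedClaw t ↪g G) :=
  nonempty_subdividedClaw_embedding (fun j => hℓ.hasLeg_of_adj (hp j) hx (hxp j) hlt) htails

theorem nonempty_claw_of_adj_two {x : V} {j k m : Fin 3} (hjk : j ≠ k) (hjm : j ≠ m) (hkm : k ≠ m)
    (hx : ℓ x = l) (hxj : G.Adj x (p j (l + 1))) (hxk : G.Adj x (p k (l + 1)))
    (hzj : ¬G.Adj (p m l) (p j (l + 1))) (hzk : ¬G.Adj (p m l) (p k (l + 1))) :
    Nonempty (subdividedClaw t ↪g G) := by
  have hz : ℓ (p m l) = l := (hp m).level (by lia)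
  have hbelow {n : Fin 3} (hnm : n ≠ m) (hzn : ¬G.Adj (p m l) (p n (l + 1))) :
      IsAnticomplete G (p n '' Set.Icc (l + 1) i) ({v | ℓ v < l} ∪ p m '' Set.Icc l i) := by
    rw [← Set.insert_Icc_succ_left_eq_Icc (show l ≤ i by lia), Set.image_insert_eq]
    exact ((hℓ.isAnticomplete_below (hp n)).union_left <|
      (hℓ.isAnticomplete_singleton (hp n) hz hzn).union_left (htails hnm.symm)).symm
  have hlegs : ∀ a, HasLeg G t x (![p j '' Set.Icc (l + 1) i, p k '' Set.Icc (l + 1) i,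
      {v | ℓ v < l} ∪ p m '' Set.Icc l i] a) := by
    simp only [Fin.forall_fin_succ]
    exact ⟨hℓ.hasLeg_of_adj (hp j) hx hxj hlt, hℓ.hasLeg_of_adj (hp k) hx hxk hlt,
      hℓ.hasLeg_below (hp m) hx hlt.le, fun a => a.elim0⟩
  exact nonempty_subdividedClaw_embedding hlegs
    ((htails hjk).pairwise_three (hbelow hjm hzj) (hbelow hkm hzk))

theorem nonempty_claw_of_adj_middle {x z : V} {j k m : Fin 3} (hjk : j ≠ k) (hjm : j ≠ m)
    (hkm : k ≠ m) (hx : ℓ x = l) (hxj : G.Adj x (p j (l + 1))) (hxk : G.Adj x (p k (l + 1)))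
    (hxm : ¬G.Adj x (p m (l + 1))) (hz : ℓ z = l) (hzm : G.Adj z (p m (l + 1)))
    (hzk : G.Adj z (p k (l + 1))) (hzj : ¬G.Adj z (p j (l + 1))) :
    Nonempty (subdividedClaw t ↪g G) := by
  have hside {w : V} {n : Fin 3} (hkn : k ≠ n) (hw : ℓ w = l) (hwk : G.Adj w (p k (l + 1)))
      (hwn : G.Adj w (p n (l + 1))) :
      HasLeg G t (p k (l + 1)) (insert w (p n '' Set.Icc (l + 1) i)) := by
    have hsep := (htails hkn).mono
      (Set.singleton_subset_iff.2 ⟨l + 1, ⟨le_rfl, by lia⟩, rfl⟩) subset_rfl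
    exact ((hℓ.hasLeg_of_adj (hp n) hw hwn hlt).cons hwk.symm hsep).mono t.le_succ subset_rfl
  have hside_top {w : V} {n : Fin 3} (hkn : k ≠ n) (hw : ℓ w = l) :
      IsAnticomplete G (insert w (p n '' Set.Icc (l + 1) i))
        (p k '' Set.Icc (l + 1 + 1) i) :=
    ((hℓ.isAnticomplete_below (hp k)).mono (by simp [hw, ENat.natCast_lt_succ])
      subset_rfl).insert_left ((htails hkn.symm).mono subset_rfl
        (Set.image_mono (Set.Icc_subset_Icc_left (l + 1).le_succ)))
  have hxz : IsAnticomplete G {x} {z} := by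
    rintro _ rfl _ rfl
    exact ⟨fun h => hxm (h ▸ hzm), fun h => by have := hℓ.succ_eq_or_of_adj h hx hz; lia⟩
  have hsides : IsAnticomplete G (insert x (p j '' Set.Icc (l + 1) i))
      (insert z (p m '' Set.Icc (l + 1) i)) :=
    (hxz.symm.insert_left (hℓ.isAnticomplete_singleton (hp m) hx hxm).symm).symm.insert_left
      ((hℓ.isAnticomplete_singleton (hp j) hz hzj).insert_left (htails hjm.symm)).symm
  have hlegs : ∀ a, HasLeg G t (p k (l + 1)) (![insert x (p j '' Set.Icc (l + 1) i),
      insert z (p m '' Set.Icc (l + 1) i), p k '' Set.Icc (l + 1 + 1) i] a) := by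
    simp only [Fin.forall_fin_succ]
    exact ⟨hside hjk.symm hx hxk hxj, hside hkm hz hzk hzm,
      hℓ.hasLeg_ascending (hp k) (by lia), fun a => a.elim0⟩
  exact nonempty_subdividedClaw_embedding hlegs
    (hsides.pairwise_three (hside_top hjk.symm hx) (hside_top hkm hz))

theorem nonempty_claw_of_haveContact (h : HaveContact G ℓ p l) :
    Nonempty (subdividedClaw t ↪g G) := by
  obtain ⟨x, hx, j, k, hjk, hxj, hxk⟩ := h
  obtain ⟨m, hmj, hmk⟩ := Fin.exists_ne_and_ne_of_two_lt j k (by lia)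
  have hthree {w : V} (hwj : G.Adj w (p j (l + 1))) (hwk : G.Adj w (p k (l + 1)))
      (hwm : G.Adj w (p m (l + 1))) (n : Fin 3) : G.Adj w (p n (l + 1)) := by
    obtain rfl | rfl | rfl : n = j ∨ n = k ∨ n = m := by lia
    all_goals assumption
  have hz : ℓ (p m l) = l := (hp m).level (by lia)
  have hzm : G.Adj (p m l) (p m (l + 1)) := (hp m).adj (by lia)
  by_cases hxm : G.Adj x (p m (l + 1))
  · exact hℓ.nonempty_claw_of_adj_three hp htails hlt hx (hthree hxj hxk hxm)
  by_cases hzj : G.Adj (p m l) (p j (l + 1)) <;> by_cases hzk : G.Adj (p m l) (p k (l + 1))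
  · exact hℓ.nonempty_claw_of_adj_three hp htails hlt hz (hthree hzj hzk hzm)
  · exact hℓ.nonempty_claw_of_adj_middle hp htails hlt hjk.symm hmk.symm hmj.symm hx hxk hxj
      hxm hz hzm hzj hzk
  · exact hℓ.nonempty_claw_of_adj_middle hp htails hlt hjk hmj.symm hmk.symm hx hxj hxk
      hxm hz hzm hzk hzj
  · exact hℓ.nonempty_claw_of_adj_two hp htails hlt hjk hmj.symm hmk.symm hx hxj hxk
      hzj hzk

end IsLayering

theorem IsLayering.nonempty_claw_of_far (hℓ : IsLayering G u ℓ)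
    (hp : ∀ j, IsAscending G ℓ i (p j))
    (hfar : Pairwise fun j k => (2 * t : ℕ) < G.edist (p j i) (p k i)) :
    Nonempty (subdividedClaw t ↪g G) := by
  have hend : Function.Injective fun j => p j i := by
    intro j k hjk
    by_contra hne
    simpa [show p j i = p k i from hjk] using hfar hne
  have hi : 0 < i := by
    by_contra! hi
    obtain rfl : i = 0 := by lia
    have hroot (j : Fin 3) : p j 0 = u := hℓ.eq_root ((hp j).level le_rfl)
    exact absurd (hend ((hroot 0).trans (hroot 1).symm)) (by decide)
  let l := Nat.findGreatest (fun m => HaveContact G ℓ p m) (i - 1)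
  have hl : HaveContact G ℓ p l :=
    Nat.findGreatest_spec (P := fun m => HaveContact G ℓ p m) (Nat.zero_le _)
      (hℓ.haveContact_zero hp hi)
  have hli : l < i := by
    have : l ≤ i - 1 := Nat.findGreatest_le _
    lia
  have hlt : l + t < i := by
    obtain ⟨j, k, hjk, hle⟩ := hl.exists_edist_le hp hli
    have : 2 * t < 2 * (i - l) := by exact_mod_cast (hfar hjk).trans_le hle
    lia
  refine hℓ.nonempty_claw_of_haveContact hp ?_ hlt hl
  exact hℓ.isAnticomplete_of_not_haveContact hp hend fun m hlm hmi =>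
    Nat.findGreatest_is_greatest hlm (by lia)

variable [Fintype V] {Δ : ℕ}

theorem IsLayering.card_level_le (hℓ : IsLayering G u ℓ) (hdeg : ∀ v, G.degree v ≤ Δ)
    (hfree : IsEmpty (subdividedClaw t ↪g G)) {L : Finset V} (hL : ∀ v ∈ L, ℓ v = i) :
    #L ≤ 2 * ballBound Δ (2 * t) := by
  by_contra! hcard
  obtain ⟨a, haL, hfar⟩ := exists_three_far hdeg hcard
  choose p hp hpa using fun j => hℓ.exists_isAscending (hL (a j) (haL j))
  simp only [← hpa] at hfar
  exact not_isEmpty_iff.2 (hℓ.nonempty_claw_of_far hp hfar) hfree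

end ThreePaths

section AdmissiblePairs

/-- A stage of the exploration that turns an admissible pair `(L, U)` into a layering: `L` is the
top level `i`, and the unexplored set `U` is disjoint from the layered part and has no edges to
levels below `i`. -/
structure IsStage {V : Type*} (G : SimpleGraph V) (u : V) (ℓ : V → ℕ∞) (i : ℕ) (L U : Finset V) :
    Prop where
  isLayering : IsLayering G u ℓ
  mem_iff {v : V} : v ∈ L ↔ ℓ v = i
  level_le {v : V} {m : ℕ} : ℓ v = m → m ≤ i
  eq_top {v : V} : v ∈ U → ℓ v = ⊤
  not_adj {v w : V} {m : ℕ} : v ∈ U → ℓ w = m → m < i → ¬G.Adj v w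

theorem isStage_singleton {V : Type*} {G : SimpleGraph V} {u : V} {U : Finset V} (hu : u ∉ U) :
    IsStage G u (fun v => if v = u then 0 else ⊤) 0 {u} U := by
  have hlevel {v : V} {m : ℕ} (h : (if v = u then 0 else ⊤ : ℕ∞) = m) : v = u ∧ m = 0 := by
    split_ifs at h with hv
    · exact ⟨hv, by exact_mod_cast h.symm⟩
    · exact absurd h.symm (ENat.natCast_ne_top m)
  refine ⟨⟨fun h => (hlevel h).1, fun h => ?_, fun hvw hv hw => ?_⟩, by simp,
    fun h => (hlevel h).2.le, fun hv => if_neg (ne_of_mem_of_not_mem hv hu), by lia⟩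
  · exact absurd (hlevel h).2 (Nat.succ_ne_zero _)
  · exact absurd ((hlevel hv).1.trans (hlevel hw).1.symm) hvw.ne

variable {V : Type*} {G : SimpleGraph V} {u : V}

/-- The level function obtained from `ℓ` by placing the vertices of `A` on level `i + 1`. -/
noncomputable def addLevel (ℓ : V → ℕ∞) (i : ℕ) (A : Finset V) (v : V) : ℕ∞ :=
  if v ∈ A then (i + 1 : ℕ) else ℓ v

theorem addLevel_eq_natCast_iff {ℓ : V → ℕ∞} {i m : ℕ} {A : Finset V} {v : V}
    (hA : ∀ v ∈ A, ℓ v = ⊤) : addLevel ℓ i A v = m ↔ v ∈ A ∧ m = i + 1 ∨ ℓ v = m := by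
  by_cases hv : v ∈ A
  · simp [addLevel, hv, hA v hv, -Nat.cast_add, eq_comm]
  · simp [addLevel, hv]

theorem IsLayering.extend {ℓ : V → ℕ∞} {i : ℕ} {A : Finset V} (hℓ : IsLayering G u ℓ)
    (htop : ∀ v ∈ A, ℓ v = ⊤) (hind : ∀ a ∈ A, ∀ b ∈ A, ¬G.Adj a b)
    (hpred : ∀ v ∈ A, ∃ x, G.Adj v x ∧ ℓ x = i)
    (hadj : ∀ v ∈ A, ∀ w, ∀ m : ℕ, ℓ w = m → G.Adj v w → m = i) :
    IsLayering G u (addLevel ℓ i A) := by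
  have hlevel {v} {m : ℕ} : addLevel ℓ i A v = m ↔ v ∈ A ∧ m = i + 1 ∨ ℓ v = m :=
    addLevel_eq_natCast_iff htop
  refine ⟨fun hv => ?_, fun {v m} hv => ?_, fun {v w j k} hvw hv hw => ?_⟩
  · obtain ⟨-, hi⟩ | hv := (hlevel (m := 0)).1 hv
    · lia
    · exact hℓ.eq_root hv
  · obtain ⟨hvA, hm⟩ | hv := hlevel.1 hv
    · obtain ⟨x, hvx, hx⟩ := hpred v hvA
      obtain rfl : m = i := by lia
      exact ⟨x, hvx.symm, hlevel.2 (.inr hx)⟩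
    · obtain ⟨w, hwv, hw⟩ := hℓ.exists_pred hv
      exact ⟨w, hwv, hlevel.2 (.inr hw)⟩
  · obtain ⟨hvA, rfl⟩ | hv := hlevel.1 hv <;> obtain ⟨hwA, rfl⟩ | hw := hlevel.1 hw
    · exact absurd hvw (hind v hvA w hwA)
    · exact .inr (by rw [hadj v hvA w k hw hvw])
    · exact .inl (by rw [hadj w hwA v j hv hvw.symm])
    · exact hℓ.succ_eq_or_of_adj hvw hv hw

theorem isIndepSet_iff_forall {S : Set V} :
    G.IsIndepSet S ↔ ∀ u ∈ S, ∀ v ∈ S, ¬G.Adj u v :=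
  ⟨fun h _ hu _ hv huv => h hu hv huv.ne huv, fun h u hu v hv _ => h u hu v hv⟩

variable [Fintype V]

theorem mem_bdry {X : Finset V} (hX : X.Nonempty) {v : V} :
    v ∈ bdry G u X ↔ v ∉ X ∧ ∃ x ∈ X, G.Adj v x := by
  simp [bdry, hX.ne_empty]

theorem bdry_empty : bdry G u ∅ = {u} :=
  if_pos rfl

theorem IsStage.step {ℓ : V → ℕ∞} {i : ℕ} {L U L' : Finset V} (h : IsStage G u ℓ i L U)
    (hL : L.Nonempty) (hL' : L' ⊆ bdry G u L ∩ U) (hind : ∀ a ∈ L', ∀ b ∈ L', ¬G.Adj a b) :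
    IsStage G u (addLevel ℓ i L') (i + 1) L' (U \ bdry G u L) := by
  have hbdry {v} (hv : v ∈ L') : v ∈ bdry G u L := (mem_inter.1 (hL' hv)).1
  have hU {v} (hv : v ∈ L') : v ∈ U := (mem_inter.1 (hL' hv)).2
  have hlevel {v} {m : ℕ} : addLevel ℓ i L' v = m ↔ v ∈ L' ∧ m = i + 1 ∨ ℓ v = m :=
    addLevel_eq_natCast_iff fun v hv => h.eq_top (hU hv)
  refine ⟨?_, fun {v} => ⟨fun hv => if_pos hv, fun hv => ?_⟩, fun {v m} hv => ?_, fun {v} hv => ?_,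
    fun {v w m} hv hw hm hvw => ?_⟩
  · refine h.isLayering.extend (fun v hv => h.eq_top (hU hv)) hind (fun v hv => ?_)
      fun v hv w m hw hvw => (h.level_le hw).eq_of_not_lt fun hmi => h.not_adj (hU hv) hw hmi hvw
    obtain ⟨-, x, hxL, hvx⟩ := (mem_bdry hL).1 (hbdry hv)
    exact ⟨x, hvx, h.mem_iff.1 hxL⟩
  · obtain ⟨hvL', -⟩ | hv := hlevel.1 hv
    · exact hvL'
    · exact absurd (h.level_le hv) (by lia)
  · obtain ⟨-, rfl⟩ | hv := hlevel.1 hv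
    · exact le_rfl
    · exact (h.level_le hv).trans i.le_succ
  · exact (if_neg fun hvL' => (mem_sdiff.1 hv).2 (hbdry hvL')).trans (h.eq_top (mem_sdiff.1 hv).1)
  · obtain ⟨hvU, hvb⟩ := mem_sdiff.1 hv
    obtain ⟨-, rfl⟩ | hℓw := hlevel.1 hw
    · lia
    obtain rfl | hlt := (h.level_le hℓw).eq_or_lt
    · have hvL : v ∉ L := fun hvL => ENat.natCast_ne_top m (h.mem_iff.1 hvL ▸ h.eq_top hvU)
      exact hvb ((mem_bdry hL).2 ⟨hvL, w, h.mem_iff.2 hℓw, hvw⟩)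
    · exact h.not_adj hvU hℓw hlt hvw

namespace Admissible

variable {L U : Finset V}

theorem exists_isStage (h : Admissible G u L U) (hL : L.Nonempty) :
    ∃ ℓ i, IsStage G u ℓ i L U := by
  induction h with
  | base => exact absurd hL not_nonempty_empty
  | root => exact ⟨_, _, isStage_singleton (by simp)⟩
  | step L' U' L _ _ hsub hind ih =>
    obtain rfl | hL' := L'.eq_empty_or_nonempty
    · rw [bdry_empty] at hsub ⊢
      obtain rfl : L = {u} := hL.subset_singleton_iff.1 (hsub.trans inter_subset_left)
      exact ⟨_, _, isStage_singleton (by simp)⟩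
    · obtain ⟨ℓ, i, hstage⟩ := ih hL'
      exact ⟨_, _, hstage.step hL' hsub hind⟩

theorem isIndepSet (h : Admissible G u L U) : G.IsIndepSet L := by
  cases h with
  | base => simp [isIndepSet_iff_forall]
  | root => simp [isIndepSet_iff_forall]
  | step _ _ _ _ _ _ hind => exact isIndepSet_iff_forall.2 hind

theorem root_notMem_sdiff_bdry (h : Admissible G u L U) : u ∉ U \ bdry G u L := by
  induction h with
  | base => simp [bdry_empty]
  | root => simp
  | step _ _ _ _ _ _ _ ih => exact fun hu => ih (mem_sdiff.1 hu).1

theorem card_le {t Δ : ℕ} (h : Admissible G u L U) (hfree : IsEmpty (subdividedClaw t ↪g G))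
    (hdeg : ∀ v, G.degree v ≤ Δ) : #L ≤ 2 * ballBound Δ (2 * t) := by
  obtain rfl | hL := L.eq_empty_or_nonempty
  · simp
  · obtain ⟨ℓ, i, hstage⟩ := h.exists_isStage hL
    exact hstage.isLayering.card_level_le hdeg hfree fun v hv => hstage.mem_iff.1 hv

theorem card_bdry_le {t Δ : ℕ} (h : Admissible G u L U)
    (hfree : IsEmpty (subdividedClaw t ↪g G)) (hdeg : ∀ v, G.degree v ≤ Δ) (hΔ : 0 < Δ) :
    #(bdry G u L) ≤ Δ * (2 * ballBound Δ (2 * t)) := by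
  obtain rfl | hL := L.eq_empty_or_nonempty
  · rw [bdry_empty, card_singleton]
    have : 0 < ballBound Δ (2 * t) := by simp [ballBound]
    exact Nat.succ_le_of_lt (by positivity)
  · have hsub : bdry G u L ⊆ L.biUnion fun x => G.neighborFinset x := by
      intro v hv
      obtain ⟨-, x, hx, hvx⟩ := (mem_bdry hL).1 hv
      exact mem_biUnion.2 ⟨x, hx, by simpa using hvx.symm⟩
    calc #(bdry G u L) ≤ #L * Δ := (card_le_card hsub).trans
          (card_biUnion_le_card_mul _ _ _ fun v _ => hdeg v)
      _ ≤ Δ * (2 * ballBound Δ (2 * t)) := by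
          rw [mul_comm]
          exact Nat.mul_le_mul_left Δ (h.card_le hfree hdeg)

end Admissible

end AdmissiblePairs

section HalfPlane

theorem norm_le_re_add_of_mem_parabR {k : ℝ} (hk : 0 < k) {z : ℂ} (hz : z ∈ parabR k) :
    ‖z‖ ≤ z.re + 1 / (2 * k) := by
  have him : z.im ^ 2 < (z.re + 1 / (4 * k)) / k := by
    convert hz.out using 1
    field_simp
  have hre : 0 < z.re + 1 / (4 * k) :=
    (div_pos_iff_of_pos_right hk).1 ((sq_nonneg z.im).trans_lt him)
  have hsq : ‖z‖ ^ 2 ≤ (z.re + 1 / (2 * k)) ^ 2 := by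
    calc ‖z‖ ^ 2 = z.re ^ 2 + z.im ^ 2 := by
          rw [← Complex.normSq_eq_norm_sq, Complex.normSq_apply, sq, sq]
      _ ≤ z.re ^ 2 + (z.re + 1 / (4 * k)) / k := by gcongr
      _ = (z.re + 1 / (2 * k)) ^ 2 := by field_simp; ring
  have hle : 1 / (4 * k) ≤ 1 / (2 * k) := by gcongr; norm_num
  exact le_of_sq_le_sq hsq (by linarith)

theorem norm_inv_sub_one_le {w : ℂ} (hw : w ∈ halfH (1 / 2)) : ‖w⁻¹ - 1‖ ≤ 1 := by
  have hre : 1 / 2 ≤ w.re := hw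
  have hw0 : w ≠ 0 := by
    rintro rfl
    norm_num at hre
  have hsq : ‖1 - w‖ ^ 2 ≤ ‖w‖ ^ 2 := by
    simp only [← Complex.normSq_eq_norm_sq, Complex.normSq_apply, Complex.sub_re, Complex.sub_im,
      Complex.one_re, Complex.one_im]
    nlinarith
  rw [show w⁻¹ - 1 = (1 - w) / w by field_simp, norm_div, div_le_one (norm_pos_iff.2 hw0)]
  exact le_of_sq_le_sq hsq (norm_nonneg w)

theorem div_mem_halfH {k : ℝ} (hk : 0 < k) {z w : ℂ} (hz : z ∈ parabR k)
    (hw : w ∈ halfH (1 / 2)) : z / w ∈ halfH (-(1 / (2 * k))) := by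
  have hnorm : ‖z * (w⁻¹ - 1)‖ ≤ z.re + 1 / (2 * k) := by
    rw [norm_mul]
    exact (mul_le_of_le_one_right (norm_nonneg z) (norm_inv_sub_one_le hw)).trans
      (norm_le_re_add_of_mem_parabR hk hz)
  have hre : -‖z * (w⁻¹ - 1)‖ ≤ (z * (w⁻¹ - 1)).re :=
    neg_le_of_abs_le (Complex.abs_re_le_norm _)
  have hsplit : z / w = z + z * (w⁻¹ - 1) := by ring
  change -(1 / (2 * k)) ≤ (z / w).re
  rw [hsplit, Complex.add_re]
  linarith

end HalfPlane

section IndependencePolynomial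

variable {V : Type*} [Fintype V] {G : SimpleGraph V} {lam : V → ℂ}

theorem indepPolyOn_eq_sum_isIndepSet (W : Finset V) :
    indepPolyOn G lam W =
      ∑ S ∈ ({S ∈ W.powerset | G.IsIndepSet S} : Finset (Finset V)), ∏ v ∈ S, lam v := by
  simp only [indepPolyOn, sum_filter, isIndepSet_iff_forall, mem_coe]

theorem indepPolyOn_eq_sum_mul {T W : Finset V} (hTW : T ⊆ W) :
    indepPolyOn G lam W = ∑ A ∈ ({A ∈ T.powerset | G.IsIndepSet A} : Finset (Finset V)),
      (∏ v ∈ A, lam v) * indepPolyOn G lam {v ∈ W \ T | ∀ a ∈ A, ¬G.Adj a v} := by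
  have hmaps : ∀ S ∈ ({S ∈ W.powerset | G.IsIndepSet S} : Finset (Finset V)),
      S ∩ T ∈ ({A ∈ T.powerset | G.IsIndepSet A} : Finset (Finset V)) := by
    simp only [mem_filter, mem_powerset, coe_inter]
    exact fun S hS => ⟨inter_subset_right, hS.2.mono Set.inter_subset_left⟩
  rw [indepPolyOn_eq_sum_isIndepSet, ← sum_fiberwise_of_maps_to hmaps]
  refine sum_congr rfl fun A hA => ?_
  rw [indepPolyOn_eq_sum_isIndepSet, mul_sum]
  refine sum_nbij' (· \ T) (A ∪ ·) ?_ ?_ ?_ ?_ ?_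
  all_goals simp only [mem_filter, mem_powerset, isIndepSet_iff_forall, mem_coe] at hA ⊢
  · grind [SimpleGraph.adj_comm]
  · grind [SimpleGraph.adj_comm]
  · grind
  · grind
  · rintro S ⟨-, rfl⟩
    exact (prod_inter_mul_prod_sdiff S T lam).symm

theorem indepPolyOn_div_mem_halfH {T W : Finset V} {k : ℝ} (hTW : T ⊆ W) (hk : 2 ^ #T ≤ k)
    (hne : indepPolyOn G lam (W \ T) ≠ 0)
    (hparab : ∀ A ⊆ T, A.Nonempty → G.IsIndepSet A → ∏ v ∈ A, lam v ∈ parabR k)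
    (hhalf : ∀ A ⊆ T, A.Nonempty → G.IsIndepSet A →
      indepPolyOn G lam (W \ T) / indepPolyOn G lam {v ∈ W \ T | ∀ a ∈ A, ¬G.Adj a v} ∈
        halfH (1 / 2)) :
    indepPolyOn G lam W / indepPolyOn G lam (W \ T) ∈ halfH (1 / 2) := by
  have hk0 : 0 < k := (by positivity : (0 : ℝ) < 2 ^ #T).trans_le hk
  set I : Finset (Finset V) := {A ∈ T.powerset | G.IsIndepSet A} with hI
  have hempty : ∅ ∈ I := by simp [hI]
  let r (A : Finset V) : ℂ := (∏ v ∈ A, lam v) /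
    (indepPolyOn G lam (W \ T) / indepPolyOn G lam {v ∈ W \ T | ∀ a ∈ A, ¬G.Adj a v})
  have hratio : indepPolyOn G lam W / indepPolyOn G lam (W \ T) = 1 + ∑ A ∈ I.erase ∅, r A := by
    have hone : r ∅ = 1 := by simp [r, hne]
    rw [← hone, add_sum_erase I r hempty, indepPolyOn_eq_sum_mul hTW, sum_div]
    exact sum_congr rfl fun A _ => (div_div_eq_mul_div _ _ _).symm
  have hterm : ∀ A ∈ I.erase ∅, -(1 / (2 * k)) ≤ (r A).re := by
    intro A hA
    obtain ⟨hA0, hA⟩ := mem_erase.1 hA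
    obtain ⟨hAT, hind⟩ := mem_filter.1 hA
    have hAT := mem_powerset.1 hAT
    have hAne := nonempty_iff_ne_empty.2 hA0
    exact div_mem_halfH hk0 (hparab A hAT hAne hind) (hhalf A hAT hAne hind)
  have hcard : (#(I.erase ∅) : ℝ) ≤ k := by
    have : #(I.erase ∅) ≤ 2 ^ #T :=
      (card_erase_le.trans (card_filter_le _ _)).trans (card_powerset T).le
    exact (by exact_mod_cast this : (#(I.erase ∅) : ℝ) ≤ 2 ^ #T).trans hk
  have hsum : -(1 / 2) ≤ (∑ A ∈ I.erase ∅, r A).re := by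
    calc -(1 / 2) = -(k * (1 / (2 * k))) := by field_simp
      _ ≤ -(#(I.erase ∅) * (1 / (2 * k))) := by gcongr
      _ = #(I.erase ∅) • -(1 / (2 * k)) := by rw [nsmul_eq_mul, mul_neg]
      _ ≤ ∑ A ∈ I.erase ∅, (r A).re := card_nsmul_le_sum _ _ _ hterm
      _ = (∑ A ∈ I.erase ∅, r A).re := (Complex.re_sum _ _).symm
  change 1 / 2 ≤ (indepPolyOn G lam W / indepPolyOn G lam (W \ T)).re
  rw [hratio, Complex.add_re, Complex.one_re]
  linarith

theorem sdiff_bdry_eq_filter {u : V} {A R : Finset V} (hA : A.Nonempty) (hAR : Disjoint A R) :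
    R \ bdry G u A = {v ∈ R | ∀ a ∈ A, ¬G.Adj a v} := by
  ext v
  have hvA (hv : v ∈ R) : v ∉ A := Finset.disjoint_right.1 hAR hv
  simp only [mem_sdiff, mem_filter, mem_bdry hA, G.adj_comm v]
  grind

variable {u : V} {W : Finset V} {k : ℝ}

theorem indepPolyOn_div_mem_halfH_of_admissible (hu : u ∈ W)
    (hne : ∀ R ⊂ W, indepPolyOn G lam R ≠ 0)
    (hk : ∀ {L U}, Admissible G u L U → 2 ^ #(bdry G u L) ≤ k)
    (hparab : ∀ {L U}, Admissible G u L U → L.Nonempty → ∏ v ∈ L, lam v ∈ parabR k)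
    {L U : Finset V} (hLU : Admissible G u L U) :
    indepPolyOn G lam (U ∩ W) / indepPolyOn G lam ((U ∩ W) \ bdry G u L) ∈ halfH (1 / 2) := by
  induction hn : #(U ∩ W) using Nat.strong_induction_on generalizing L U with
  | _ n ih =>
  set T := U ∩ W ∩ bdry G u L
  have hTW : T ⊆ U ∩ W := inter_subset_left
  have hR : (U ∩ W) \ T = U \ bdry G u L ∩ W := by grind
  have hRW : U \ bdry G u L ∩ W ⊂ W :=
    inter_subset_right.ssubset_of_mem_notMem hu fun h =>
      hLU.root_notMem_sdiff_bdry (mem_inter.1 h).1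
  have hnext {A : Finset V} (hAT : A ⊆ T) (hA : A.Nonempty) (hind : G.IsIndepSet A) :
      Admissible G u A (U \ bdry G u L) :=
    .step L U A hLU hA (by grind) (isIndepSet_iff_forall.1 hind)
  have hTk : 2 ^ #T ≤ k :=
    (pow_le_pow_right₀ one_le_two (card_le_card inter_subset_right)).trans (hk hLU)
  rw [← sdiff_inter_self_left (U ∩ W) (bdry G u L)]
  refine indepPolyOn_div_mem_halfH hTW hTk (hR ▸ hne _ hRW)
    (fun A hAT hA hind => hparab (hnext hAT hA hind) hA) fun A hAT hA hind => ?_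
  have hdisj : Disjoint A ((U ∩ W) \ T) := disjoint_sdiff.mono_left hAT
  have hlt : #(U \ bdry G u L ∩ W) < n := by
    obtain ⟨a, ha⟩ := hA
    rw [← hR, ← hn]
    exact card_lt_card (sdiff_ssubset hTW ⟨a, hAT ha⟩)
  rw [← sdiff_bdry_eq_filter (u := u) hA hdisj, hR]
  exact ih _ hlt (hnext hAT hA hind) rfl

theorem indepPolyOn_ne_zero (hk : ∀ {u L U}, Admissible G u L U → 2 ^ #(bdry G u L) ≤ k)
    (hparab : ∀ {u L U}, Admissible G u L U → L.Nonempty → ∏ v ∈ L, lam v ∈ parabR k) :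
    indepPolyOn G lam W ≠ 0 := by
  induction W using Finset.strongInduction with
  | H W ih =>
  obtain rfl | ⟨u, hu⟩ := W.eq_empty_or_nonempty
  · simp [indepPolyOn]
  · have hhalf := indepPolyOn_div_mem_halfH_of_admissible hu ih hk hparab (.base (u := u))
    rw [univ_inter] at hhalf
    intro hzero
    rw [hzero, zero_div] at hhalf
    norm_num [halfH] at hhalf

end IndependencePolynomial

theorem stmt7_general {t Δ : ℕ} (hΔ : 3 ≤ Δ) {V : Type*} [Fintype V] {G : SimpleGraph V}
    (hfree : IsEmpty (subdividedClaw t ↪g G)) (hdeg : ∀ v : V, (G.neighborSet v).ncard ≤ Δ)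
    {lam : V → ℂ}
    (hlam : ∀ S : Finset V, G.IsIndepSet S → S.Nonempty → (#S : ℝ) ≤ 2 * vol Δ (2 * t) →
      ∏ v ∈ S, lam v ∈ parabR ((2 : ℝ) ^ ((Δ : ℝ) * (2 * vol Δ (2 * t))))) :
    indepPoly G lam ≠ 0 := by
  have hdegree (v : V) : G.degree v ≤ Δ := by
    rw [← G.card_neighborSet_eq_degree, ← Nat.card_eq_fintype_card]
    exact hdeg v
  simp only [← cast_ballBound hΔ] at hlam
  refine indepPolyOn_ne_zero (k := 2 ^ (Δ * (2 * (ballBound Δ (2 * t) : ℝ)))) ?_ ?_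
  · intro u L U hLU
    rw [← Real.rpow_natCast]
    gcongr
    · exact one_le_two
    · exact_mod_cast hLU.card_bdry_le hfree hdegree (by lia)
  · exact fun hLU hL => hlam _ hLU.isIndepSet hL (by exact_mod_cast hLU.card_le hfree hdegree)

/-- with `r = 2·vol(Δ, 2t)`, if `λ ∈ ℂ` has `Re λ ≥ 0` and
`λ^s ∈ R(2^{Δr})` for every integer `1 ≤ s ≤ r`, then the univariate
independence polynomial of every finite `S_{t,t,t}`-free simple graph of
maximum degree at most `Δ` is nonzero at `λ`. -/
theorem stmt7 (t Δ : ℕ) (ht : 1 ≤ t) (hΔ : 3 ≤ Δ) (lam : ℂ)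
    (hre : 0 ≤ lam.re)
    (hpow : ∀ s : ℕ, 1 ≤ s → (s : ℝ) ≤ 2 * vol Δ (2 * t) →
      lam ^ s ∈ parabR ((2 : ℝ) ^ ((Δ : ℝ) * (2 * vol Δ (2 * t)))))
    {V : Type} [Fintype V] (G : SimpleGraph V)
    (hfree : IsEmpty (subdividedClaw t ↪g G))
    (hdeg : ∀ v : V, (G.neighborSet v).ncard ≤ Δ) :
    indepPoly G (fun _ => lam) ≠ 0 := by
  exact stmt7_general hΔ hfree hdeg fun S _ hS hcard => by
    simpa using hpow #S hS.card_pos hcard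
end

section
/- Let k ≥ 1 and let G = (V,E) be a finite claw-free simple graph whose largest clique has size at most k and each of whose connected components contains a simplicial clique; let K be a simplicial clique of G, and let G + u_K be the graph obtained from G by adding a new vertex u_K adjacent exactly to the vertices of K. Let P be a path in G + u_K starting at u_K with endpoint x (possibly x = u_K when P is a single vertex), designate x as the active endpoint, and set A_{Px} = V(P) ∪ ∂(V(P) ∖ {x}) and U_{Px} = V(G + u_K) ∖ A_{Px}. Then for every assignment of weights λ = (λ_v)_{v∈V} with λ_v ∈ R(k) for all v ∈ V: (i) Z(U_{Px}) ≠ 0 and Z(U_{Px} ∖ ∂x) ≠ 0; and (ii) Re( Z(U_{Px}) / Z(U_{Px} ∖ ∂x) ) ≥ 1/2. -/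
attribute [local instance] Classical.propDecidable

/-- `K` is a simplicial clique in `G`: `K` is a clique and, for every `v ∈ K`,
the neighbours of `v` outside `K` induce a clique. -/
def IsSimplicialClique {V : Type*} (G : SimpleGraph V) (K : Set V) : Prop :=
  G.IsClique K ∧ ∀ v ∈ K, G.IsClique {w : V | G.Adj v w ∧ w ∉ K}

/-- Every connected component of `G` contains a (nonempty) simplicial clique. -/
def EveryComponentHasSimplicialClique {V : Type*} (G : SimpleGraph V) : Prop :=
  ∀ c : G.ConnectedComponent, ∃ K : Set V, K.Nonempty ∧
    (∀ v ∈ K, G.connectedComponentMk v = c) ∧ IsSimplicialClique G K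

/-- The graph `G + u_K`: a new vertex (`none`) is added to `G` and joined to
exactly the vertices of `K`. -/
def addVertex {V : Type*} (G : SimpleGraph V) (K : Set V) :
    SimpleGraph (Option V) :=
  SimpleGraph.fromRel (fun a b =>
    match a, b with
    | some u, some v => G.Adj u v
    | none, some v => v ∈ K
    | _, _ => False)

/-- The boundary `∂X`: vertices outside `X` with a neighbour in `X`. -/
noncomputable def nbd {W : Type*} [Fintype W] (H : SimpleGraph W)
    (X : Finset W) : Finset W :=
  Finset.univ.filter (fun v => v ∉ X ∧ ∃ x ∈ X, H.Adj v x)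

/-!
If `N` is a simplicial clique of `G[W]`, an independent set of `G[W]` uses at most one vertex of
`N`, so `Z(W) / Z(W ∖ N) = 1 + ∑ y ∈ N, lam y / r y` with `r y = Z(W ∖ N) / Z(W ∖ N ∖ ∂y)`.
By claw-freeness `∂y` cuts out a simplicial clique of `G[W ∖ N]`, so inductively `Re (r y) ≥ 1/2`,
that is, `1 / r y` lies in the closed unit disc around `1`. The parabola bounding `R(k)` has focus
`0` and directrix `Re z = -1/(2k)`, hence each of the at most `k` summands has real part at least
`-1/(2k)`. To start the induction, every nonempty `W` has a nonempty simplicial clique: follow a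
walk from a simplicial clique of the component until it first sees `W`.
Finally, `G + u_K` is again claw-free with a simplicial clique in every component, and `∂x` cuts
out a simplicial clique of `U_{Px}`: no vertex of `U_{Px}` is adjacent to the predecessor of `x`
on `P`, so the neighbours of `x` in `U_{Px}` form a clique by claw-freeness.
-/

section Parabola

lemma norm_lt_of_mem_parabR {k : ℝ} (hk : 0 < k) {z : ℂ} (hz : z ∈ parabR k) :
    ‖z‖ < z.re + 1 / (2 * k) := by
  have him : z.im ^ 2 < z.re / k + 1 / (4 * k ^ 2) := hz
  have hfocus : z.re / k + 1 / (4 * k ^ 2) = (z.re + 1 / (2 * k)) ^ 2 - z.re ^ 2 := by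
    field_simp
    ring
  have hpos : 0 < z.re + 1 / (2 * k) := by
    have hvertex : z.re / k + 1 / (4 * k ^ 2) = (z.re + 1 / (4 * k)) / k := by field_simp
    have hre : 0 < z.re + 1 / (4 * k) := by
      rw [← div_pos_iff_of_pos_right hk, ← hvertex]
      exact (sq_nonneg _).trans_lt him
    have hle : 1 / (4 * k) ≤ 1 / (2 * k) := by gcongr; norm_num
    linarith
  refine lt_of_pow_lt_pow_left₀ 2 hpos.le ?_
  rw [Complex.sq_norm, Complex.normSq_apply]
  linarith

lemma norm_inv_sub_one_le_one {r : ℂ} (hr : 1 / 2 ≤ r.re) : ‖r⁻¹ - 1‖ ≤ 1 := by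
  have hr0 : r ≠ 0 := by
    rintro rfl
    norm_num at hr
  rw [show r⁻¹ - 1 = (1 - r) / r by field_simp, norm_div, div_le_one (norm_pos_iff.2 hr0),
    ← sq_le_sq₀ (norm_nonneg _) (norm_nonneg _), Complex.sq_norm, Complex.sq_norm,
    Complex.normSq_apply, Complex.normSq_apply]
  simp only [Complex.sub_re, Complex.one_re, Complex.sub_im, Complex.one_im]
  linarith

lemma neg_le_re_div_of_mem_parabR {k : ℝ} (hk : 0 < k) {z r : ℂ} (hz : z ∈ parabR k)
    (hr : 1 / 2 ≤ r.re) : -(1 / (2 * k)) ≤ (z / r).re := by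
  have hsplit : (z / r).re = z.re + (z * (r⁻¹ - 1)).re := by
    rw [← Complex.add_re, div_eq_mul_inv]
    ring_nf
  have hdisc : |(z * (r⁻¹ - 1)).re| ≤ ‖z‖ :=
    calc |(z * (r⁻¹ - 1)).re| ≤ ‖z‖ * ‖r⁻¹ - 1‖ := by
          rw [← norm_mul]
          exact Complex.abs_re_le_norm _
      _ ≤ ‖z‖ := mul_le_of_le_one_right (norm_nonneg _) (norm_inv_sub_one_le_one hr)
  linarith [norm_lt_of_mem_parabR hk hz, (abs_le.1 hdisc).1]

-- The bound excludes a zero denominator only through the convention `a / 0 = 0`.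
lemma ne_zero_of_half_le_re_div {a b : ℂ} (h : 1 / 2 ≤ (a / b).re) : a ≠ 0 ∧ b ≠ 0 := by
  constructor <;>
  · rintro rfl
    norm_num at h

end Parabola

section IndependencePolynomial

lemma forall_not_adj_insert_iff {V : Type*} {G : SimpleGraph V} {y : V} {S : Finset V}
    (hyS : ∀ v ∈ S, ¬G.Adj y v) :
    (∀ u ∈ insert y S, ∀ v ∈ insert y S, ¬G.Adj u v) ↔ ∀ u ∈ S, ∀ v ∈ S, ¬G.Adj u v := by
  simp only [Finset.forall_mem_insert, SimpleGraph.irrefl, not_false_eq_true, true_and]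
  exact ⟨fun h u hu => (h.2 u hu).2, fun h => ⟨hyS, fun u hu => ⟨fun e => hyS u hu e.symm, h u hu⟩⟩⟩

variable {V : Type*} [Fintype V] (G : SimpleGraph V) (lam : V → ℂ)

lemma indepPolyOn_empty : indepPolyOn G lam ∅ = 1 := by
  simp [indepPolyOn]

lemma indepPolyOn_insert {W : Finset V} {y : V} (hy : y ∉ W) :
    indepPolyOn G lam (insert y W) =
      indepPolyOn G lam W + lam y * indepPolyOn G lam (W \ W.filter (G.Adj y)) := by
  unfold indepPolyOn
  rw [Finset.sum_powerset_insert hy, Finset.mul_sum]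
  congr 1
  symm
  apply Finset.sum_subset_zero_on_sdiff (Finset.powerset_mono.2 Finset.sdiff_subset)
  · intro S hS
    simp only [Finset.mem_sdiff, Finset.mem_powerset] at hS
    refine if_neg fun hindep => hS.2 fun v hv => ?_
    have hyv := hindep y (Finset.mem_insert_self y S) v (Finset.mem_insert_of_mem hv)
    simp [hS.1 hv, hyv]
  · intro S hS
    have hSW : ∀ v ∈ S, v ∈ W ∧ ¬G.Adj y v := fun v hv => by
      simp only [Finset.mem_powerset] at hS
      grind
    rw [Finset.prod_insert fun hyS => hy (hSW y hyS).1, mul_ite, mul_zero]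
    exact if_congr (forall_not_adj_insert_iff fun v hv => (hSW v hv).2).symm rfl rfl

variable {G}

lemma indepPolyOn_union_of_isClique {W N : Finset V} (hWN : Disjoint W N)
    (hN : G.IsClique (N : Set V)) :
    indepPolyOn G lam (W ∪ N) = indepPolyOn G lam W +
      ∑ y ∈ N, lam y * indepPolyOn G lam (W \ W.filter (G.Adj y)) := by
  induction N using Finset.induction_on with
  | empty => simp
  | insert y N hyN ih =>
    rw [Finset.disjoint_insert_right] at hWN
    rw [Finset.coe_insert, SimpleGraph.isClique_insert] at hN
    have hremove : (W ∪ N) \ (W ∪ N).filter (G.Adj y) = W \ W.filter (G.Adj y) := by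
      ext v
      have hyv : v ∈ N → G.Adj y v := fun hv => hN.2 v hv (ne_of_mem_of_not_mem hv hyN).symm
      simp only [Finset.mem_sdiff, Finset.mem_union, Finset.mem_filter]
      tauto
    rw [Finset.union_insert, indepPolyOn_insert _ _ (by simp [hWN.1, hyN]), hremove,
      ih hWN.2 hN.1, Finset.sum_insert hyN]
    ring

lemma half_le_re_indepPolyOn_div_of_isClique {k : ℝ} {W N : Finset V} (hNW : N ⊆ W)
    (hN : G.IsClique (N : Set V)) (hne : N.Nonempty) (hcard : N.card ≤ k)
    (hlam : ∀ y ∈ N, lam y ∈ parabR k)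
    (hratio : ∀ y ∈ N, 1 / 2 ≤ (indepPolyOn G lam (W \ N) /
      indepPolyOn G lam ((W \ N) \ (W \ N).filter (G.Adj y))).re) :
    1 / 2 ≤ (indepPolyOn G lam W / indepPolyOn G lam (W \ N)).re := by
  have hk : 0 < k := lt_of_lt_of_le (by exact_mod_cast hne.card_pos) hcard
  obtain ⟨y₀, hy₀⟩ := hne
  have hZ := (ne_zero_of_half_le_re_div (hratio y₀ hy₀)).1
  have hexpand : indepPolyOn G lam W / indepPolyOn G lam (W \ N) = 1 + ∑ y ∈ N, lam y /
      (indepPolyOn G lam (W \ N) /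
        indepPolyOn G lam ((W \ N) \ (W \ N).filter (G.Adj y))) := by
    have h := indepPolyOn_union_of_isClique lam Finset.sdiff_disjoint hN (W := W \ N)
    rw [Finset.sdiff_union_of_subset hNW] at h
    rw [h, add_div, div_self hZ, Finset.sum_div]
    simp only [div_div_eq_mul_div]
  have hsum := Finset.card_nsmul_le_sum N _ _ fun y hy =>
    neg_le_re_div_of_mem_parabR hk (hlam y hy) (hratio y hy)
  have hhalf : N.card * (1 / (2 * k)) ≤ 1 / 2 :=
    calc N.card * (1 / (2 * k)) ≤ k * (1 / (2 * k)) := by gcongr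
      _ = 1 / 2 := by field_simp
  rw [nsmul_eq_mul] at hsum
  rw [hexpand, Complex.add_re, Complex.one_re, Complex.re_sum]
  linarith

end IndependencePolynomial

section ClawFree

/-- Claw-freeness in a form suited to producing cliques: inside the neighbourhood of any vertex `c`,
the vertices that are neither equal nor adjacent to a given neighbour `a` of `c` form a clique. -/
def IsClawFree {V : Type*} (G : SimpleGraph V) : Prop :=
  ∀ ⦃c a⦄, G.Adj c a → G.IsClique {b | G.Adj c b ∧ b ≠ a ∧ ¬G.Adj a b}

/-- The notion of a simplicial clique `N` of the induced subgraph `G[W]`, phrased with subsets of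
the vertices of `G` so that `W` can shrink without changing the vertex type. -/
def IsSimplicialCliqueIn {V : Type*} (G : SimpleGraph V) (W N : Finset V) : Prop :=
  N ⊆ W ∧ G.IsClique (N : Set V) ∧
    ∀ y ∈ N, G.IsClique ((W \ N).filter (G.Adj y) : Set V)

variable {V : Type*} {G : SimpleGraph V}

lemma nonempty_subdividedClaw_one_embedding {c : V} {leaf : Fin 3 → V}
    (hinj : Function.Injective leaf) (hadj : ∀ i, G.Adj c (leaf i))
    (hindep : ∀ i j, ¬G.Adj (leaf i) (leaf j)) : Nonempty (subdividedClaw 1 ↪g G) := by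
  let f : Option (Fin 3 × Fin 1) → V := fun o => o.elim c fun p => leaf p.1
  have hf : Function.Injective f := by
    rintro (_ | ⟨i, s⟩) (_ | ⟨j, t⟩) h
    · rfl
    · exact absurd h (hadj j).ne
    · exact absurd h (hadj i).ne'
    · obtain rfl : i = j := hinj h
      rw [Subsingleton.elim s t]
  have hfadj : ∀ a b, G.Adj (f a) (f b) ↔ (subdividedClaw 1).Adj a b := by
    rintro (_ | ⟨i, s⟩) (_ | ⟨j, t⟩)
    · simp
    · simp [f, subdividedClaw, hadj j]
    · simp [f, subdividedClaw, (hadj i).symm]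
    · simp [f, subdividedClaw, hindep i j]
  exact ⟨⟨⟨f, hf⟩, hfadj _ _⟩⟩

lemma isClawFree_of_isEmpty_embedding (h : IsEmpty (subdividedClaw 1 ↪g G)) : IsClawFree G := by
  rintro c a hca b ⟨hcb, hba, hab⟩ d ⟨hcd, hda, had⟩ hbd
  by_contra hbd'
  refine (nonempty_subdividedClaw_one_embedding (c := c) (leaf := ![a, b, d]) ?_ ?_ ?_).elim h.false
  · simp [Function.Injective, Fin.forall_fin_succ, hba, hba.symm, hda, hda.symm, hbd, hbd.symm]
  · simp [Fin.forall_fin_succ, hca, hcb, hcd]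
  · simp [Fin.forall_fin_succ, hab, had, hbd', G.adj_comm b a, G.adj_comm d a, G.adj_comm d b]

lemma IsClawFree.isSimplicialCliqueIn_filter_adj (hG : IsClawFree G) {W : Finset V} {v : V}
    (hv : v ∉ W) (hclique : G.IsClique (W.filter (G.Adj v) : Set V)) :
    IsSimplicialCliqueIn G W (W.filter (G.Adj v)) := by
  refine ⟨Finset.filter_subset _ _, hclique, fun y hy => ?_⟩
  refine (hG (Finset.mem_filter.1 hy).2.symm).subset fun w hw => ?_
  simp only [Finset.coe_filter, Finset.mem_sdiff, Finset.mem_filter, not_and,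
    Set.mem_ofPred_eq] at hw
  exact ⟨hw.2, ne_of_mem_of_not_mem hw.1.1 hv, hw.1.2 hw.1.1⟩

lemma IsClawFree.isClique_filter_adj (hG : IsClawFree G) {W : Finset V} {p x : V}
    (hxp : G.Adj x p) (hp : p ∉ W) (hpW : ∀ w ∈ W, ¬G.Adj p w) :
    G.IsClique (W.filter (G.Adj x) : Set V) := by
  refine (hG hxp).subset fun w hw => ?_
  obtain ⟨hwW, hxw⟩ := Finset.mem_filter.1 hw
  exact ⟨hxw, ne_of_mem_of_not_mem hwW hp, hpW w hwW⟩

lemma IsSimplicialClique.isSimplicialCliqueIn_filter_mem {K : Set V}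
    (hK : IsSimplicialClique G K) (W : Finset V) :
    IsSimplicialCliqueIn G W (W.filter (· ∈ K)) := by
  refine ⟨Finset.filter_subset _ _, hK.1.subset fun w hw => (Finset.mem_filter.1 hw).2, ?_⟩
  refine fun y hy => (hK.2 y (Finset.mem_filter.1 hy).2).subset fun w hw => ?_
  simp only [Finset.coe_filter, Finset.mem_sdiff, Finset.mem_filter, not_and,
    Set.mem_ofPred_eq] at hw
  exact ⟨hw.2, hw.1.2 hw.1.1⟩

lemma IsClawFree.exists_isSimplicialCliqueIn_of_reachable (hG : IsClawFree G) {W : Finset V}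
    {v w : V} (hvw : G.Reachable v w) (hv : v ∉ W) (hw : w ∈ W)
    (hclique : G.IsClique (W.filter (G.Adj v) : Set V)) :
    ∃ N, N.Nonempty ∧ IsSimplicialCliqueIn G W N := by
  obtain ⟨P⟩ := hvw
  induction P with
  | nil => exact absurd hw hv
  | @cons v v' w hvv' _ ih =>
    rcases (W.filter (G.Adj v)).eq_empty_or_nonempty with hempty | hne
    · have hvW : ∀ z ∈ W, ¬G.Adj v z := Finset.filter_eq_empty_iff.1 hempty
      exact ih (fun hv' => hvW v' hv' hvv') hw (hG.isClique_filter_adj hvv'.symm hv hvW)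
    · exact ⟨_, hne, hG.isSimplicialCliqueIn_filter_adj hv hclique⟩

lemma IsClawFree.exists_isSimplicialCliqueIn (hG : IsClawFree G)
    (hsimp : EveryComponentHasSimplicialClique G) {W : Finset V} (hW : W.Nonempty) :
    ∃ N, N.Nonempty ∧ IsSimplicialCliqueIn G W N := by
  obtain ⟨w, hw⟩ := hW
  obtain ⟨K, ⟨a, ha⟩, hKc, hK⟩ := hsimp (G.connectedComponentMk w)
  rcases (W.filter (· ∈ K)).eq_empty_or_nonempty with hempty | hne
  · have hWK : ∀ z ∈ W, z ∉ K := Finset.filter_eq_empty_iff.1 hempty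
    have haw := SimpleGraph.ConnectedComponent.exact (hKc a ha)
    refine hG.exists_isSimplicialCliqueIn_of_reachable haw (fun haW => hWK a haW ha) hw ?_
    refine (hK.2 a ha).subset fun z hz => ?_
    obtain ⟨hzW, haz⟩ := Finset.mem_filter.1 hz
    exact ⟨haz, hWK z hzW⟩
  · exact ⟨_, hne, hK.isSimplicialCliqueIn_filter_mem W⟩

theorem IsClawFree.half_le_re_indepPolyOn_div [Fintype V] (hG : IsClawFree G)
    (hsimp : EveryComponentHasSimplicialClique G) {k : ℕ} {lam : V → ℂ} {W N : Finset V}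
    (hcard : ∀ s ⊆ W, G.IsClique (s : Set V) → s.card ≤ k) (hlam : ∀ v ∈ W, lam v ∈ parabR k)
    (hN : IsSimplicialCliqueIn G W N) :
    1 / 2 ≤ (indepPolyOn G lam W / indepPolyOn G lam (W \ N)).re := by
  induction W using Finset.strongInduction generalizing N with
  | H W ih =>
    have hnonempty : ∀ {M : Finset V}, M.Nonempty → IsSimplicialCliqueIn G W M →
        1 / 2 ≤ (indepPolyOn G lam W / indepPolyOn G lam (W \ M)).re := by
      rintro M hM ⟨hMW, hclique, hnbrs⟩
      refine half_le_re_indepPolyOn_div_of_isClique lam hMW hclique hM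
        (mod_cast hcard M hMW hclique) (fun y hy => hlam y (hMW hy)) fun y hy => ?_
      refine ih (W \ M) (Finset.sdiff_ssubset hMW hM)
        (fun s hs => hcard s (hs.trans Finset.sdiff_subset))
        (fun v hv => hlam v (Finset.sdiff_subset hv)) ?_
      exact hG.isSimplicialCliqueIn_filter_adj (by simp [hy]) (hnbrs y hy)
    rcases N.eq_empty_or_nonempty with rfl | hne
    · have hZ : indepPolyOn G lam W ≠ 0 := by
        rcases W.eq_empty_or_nonempty with rfl | hW
        · simp [indepPolyOn_empty]
        · obtain ⟨M, hM, hMs⟩ := hG.exists_isSimplicialCliqueIn hsimp hW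
          exact (ne_zero_of_half_le_re_div (hnonempty hM hMs)).1
      rw [Finset.sdiff_empty, div_self hZ]
      norm_num
    · exact hnonempty hne hN

end ClawFree

section AddVertex

variable {V : Type*} {G : SimpleGraph V} {K : Set V}

@[simp]
lemma addVertex_adj_some_some {u v : V} : (addVertex G K).Adj (some u) (some v) ↔ G.Adj u v := by
  simp only [addVertex, SimpleGraph.fromRel_adj, ne_eq, Option.some.injEq, G.adj_comm v u, or_self,
    and_iff_right_iff_imp]
  exact SimpleGraph.Adj.ne

@[simp]
lemma addVertex_adj_none_some {v : V} : (addVertex G K).Adj none (some v) ↔ v ∈ K := by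
  simp [addVertex]

@[simp]
lemma addVertex_adj_some_none {v : V} : (addVertex G K).Adj (some v) none ↔ v ∈ K := by
  simp [addVertex]

lemma isClique_addVertex_image_some {S : Set V} :
    (addVertex G K).IsClique (some '' S) ↔ G.IsClique S := by
  rw [SimpleGraph.IsClique, SimpleGraph.IsClique, (Option.some_injective V).injOn.pairwise_image]
  simp only [Function.onFun, Set.Pairwise, addVertex_adj_some_some]

lemma addVertex_neighborSet_none : (addVertex G K).neighborSet none = some '' K := by
  ext (_ | v) <;> simp

lemma isClique_addVertex_neighborSet_none (hK : G.IsClique K) :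
    (addVertex G K).IsClique ((addVertex G K).neighborSet none) := by
  rwa [addVertex_neighborSet_none, isClique_addVertex_image_some]

lemma isClique_addVertex_insert_none (hK : G.IsClique K) :
    (addVertex G K).IsClique (insert none (some '' K)) := by
  refine SimpleGraph.isClique_insert.2 ⟨isClique_addVertex_image_some.2 hK, ?_⟩
  rintro _ ⟨v, hv, rfl⟩ _
  exact addVertex_adj_none_some.2 hv

lemma isClawFree_addVertex (hG : IsClawFree G) (hK : IsSimplicialClique G K) :
    IsClawFree (addVertex G K) := by
  rintro (_ | c) a hca
  · rw [← SimpleGraph.mem_neighborSet, addVertex_neighborSet_none] at hca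
    refine (isClique_addVertex_insert_none hK.1).subset fun b hb => ?_
    exact .inr (addVertex_neighborSet_none ▸ hb.1)
  rcases a with _ | a
  · have hc : c ∈ K := addVertex_adj_some_none.1 hca
    refine (isClique_addVertex_image_some.2 (hK.2 c hc)).subset ?_
    rintro (_ | b) ⟨hcb, hb, hKb⟩
    · exact absurd rfl hb
    · exact ⟨b, ⟨addVertex_adj_some_some.1 hcb, hKb ∘ addVertex_adj_none_some.2⟩, rfl⟩
  rw [addVertex_adj_some_some] at hca
  by_cases h : c ∈ K ∧ a ∉ K
  · refine (isClique_addVertex_insert_none hK.1).subset ?_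
    rintro (_ | b) ⟨hcb, hba, hab⟩
    · exact .inl rfl
    · rw [addVertex_adj_some_some] at hcb hab
      have hbK : b ∈ K := by_contra fun hbK =>
        hab (hK.2 c h.1 ⟨hca, h.2⟩ ⟨hcb, hbK⟩ fun hab => hba (congrArg some hab.symm))
      exact .inr ⟨b, hbK, rfl⟩
  · refine (isClique_addVertex_image_some.2 (hG hca)).subset ?_
    rintro (_ | b) ⟨hcb, hba, hab⟩
    · rw [addVertex_adj_some_none] at hcb hab
      exact absurd ⟨hcb, hab⟩ h
    · rw [addVertex_adj_some_some] at hcb hab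
      exact ⟨b, ⟨hcb, fun h => hba (congrArg some h), hab⟩, rfl⟩

lemma isSimplicialClique_addVertex_image_some {L : Set V} (hL : IsSimplicialClique G L)
    (hLK : Disjoint L K) : IsSimplicialClique (addVertex G K) (some '' L) := by
  refine ⟨isClique_addVertex_image_some.2 hL.1, ?_⟩
  rintro _ ⟨v, hv, rfl⟩
  refine (isClique_addVertex_image_some.2 (hL.2 v hv)).subset ?_
  rintro (_ | a) ⟨hva, ha⟩
  · exact absurd (addVertex_adj_some_none.1 hva) (Set.disjoint_left.1 hLK hv)
  · exact ⟨a, ⟨addVertex_adj_some_some.1 hva, fun haL => ha ⟨a, haL, rfl⟩⟩, rfl⟩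

lemma everyComponentHasSimplicialClique_addVertex
    (hsimp : EveryComponentHasSimplicialClique G) (hK : G.IsClique K) :
    EveryComponentHasSimplicialClique (addVertex G K) := by
  intro C
  induction C using SimpleGraph.ConnectedComponent.ind with | _ v
  by_cases hv : (addVertex G K).Reachable none v
  · refine ⟨{none}, Set.singleton_nonempty _, ?_, SimpleGraph.isClique_singleton _, ?_⟩
    · simpa using hv
    · rintro _ rfl
      exact (isClique_addVertex_neighborSet_none hK).subset fun w hw => hw.1
  · rcases v with _ | v
    · exact absurd .rfl hv
    obtain ⟨L, hne, hLv, hL⟩ := hsimp (G.connectedComponentMk v)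
    have hreach : ∀ w ∈ L, (addVertex G K).Reachable (some w) (some v) := fun w hw =>
      (SimpleGraph.ConnectedComponent.exact (hLv w hw)).map ⟨some, addVertex_adj_some_some.2⟩
    have hLK : Disjoint L K := Set.disjoint_left.2 fun w hw hwK =>
      hv ((addVertex_adj_none_some.2 hwK).reachable.trans (hreach w hw))
    refine ⟨some '' L, hne.image _, ?_, isSimplicialClique_addVertex_image_some hL hLK⟩
    rintro _ ⟨w, hw, rfl⟩
    exact SimpleGraph.ConnectedComponent.sound (hreach w hw)

lemma card_le_of_isClique_addVertex {k : ℕ}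
    (hcard : ∀ s : Finset V, G.IsClique (s : Set V) → s.card ≤ k) {s : Finset (Option V)}
    (hs : none ∉ s) (hclique : (addVertex G K).IsClique (s : Set (Option V))) : s.card ≤ k := by
  have hmap : s.eraseNone.map .some = s := by
    rw [Finset.map_some_eraseNone, Finset.erase_eq_of_notMem hs]
  rw [← hmap, Finset.coe_map] at hclique
  rw [← hmap, Finset.card_map]
  exact hcard _ (isClique_addVertex_image_some.1 hclique)

end AddVertex

section Walk

variable {V : Type*} [Fintype V] {G : SimpleGraph V} {u x : V}

/-- The set `U_{Px}` of a walk `P` with active endpoint `x`: the complement of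
`A_{Px} = V(P) ∪ ∂(V(P) ∖ {x})`. -/
noncomputable def unexplored (P : G.Walk u x) : Finset V :=
  Finset.univ \ (P.support.toFinset ∪ nbd G (P.support.toFinset \ {x}))

lemma mem_unexplored {P : G.Walk u x} {v : V} :
    v ∈ unexplored P ↔ v ∉ P.support ∧ ∀ p ∈ P.support, p ≠ x → ¬G.Adj p v := by
  simp only [unexplored, nbd, Finset.mem_sdiff, Finset.mem_univ, Finset.mem_union,
    List.mem_toFinset, Finset.mem_filter, Finset.mem_singleton, true_and, G.adj_comm v]
  grind

lemma unexplored_sdiff_nbd (P : G.Walk u x) :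
    unexplored P \ nbd G {x} = unexplored P \ (unexplored P).filter (G.Adj x) := by
  ext v
  have hvx : v ∈ unexplored P → v ≠ x := fun hv =>
    (ne_of_mem_of_not_mem P.end_mem_support (mem_unexplored.1 hv).1).symm
  simp only [nbd, Finset.mem_sdiff, Finset.mem_filter, Finset.mem_univ, Finset.mem_singleton,
    true_and, exists_eq_left, G.adj_comm v]
  tauto

lemma IsClawFree.isSimplicialCliqueIn_unexplored (hG : IsClawFree G)
    (hu : G.IsClique (G.neighborSet u)) (P : G.Walk u x) :
    IsSimplicialCliqueIn G (unexplored P) ((unexplored P).filter (G.Adj x)) := by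
  refine hG.isSimplicialCliqueIn_filter_adj (fun hx => (mem_unexplored.1 hx).1 P.end_mem_support) ?_
  by_cases hP : P.Nil
  · obtain rfl := hP.eq
    exact hu.subset fun w hw => (Finset.mem_filter.1 hw).2
  · have hadj := P.adj_penultimate hP
    have hmem : P.penultimate ∈ P.support := P.getVert_mem_support _
    exact hG.isClique_filter_adj hadj.symm (fun hp => (mem_unexplored.1 hp).1 hmem)
      fun w hw => (mem_unexplored.1 hw).2 _ hmem hadj.ne

theorem stmt9_general (hG : IsClawFree G) (hsimp : EveryComponentHasSimplicialClique G)
    (hu : G.IsClique (G.neighborSet u)) {k : ℕ}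
    (hcard : ∀ s : Finset V, u ∉ s → G.IsClique (s : Set V) → s.card ≤ k) {lam : V → ℂ}
    (hlam : ∀ v ≠ u, lam v ∈ parabR k) (P : G.Walk u x) :
    (indepPolyOn G lam (unexplored P) ≠ 0 ∧
      indepPolyOn G lam (unexplored P \ nbd G {x}) ≠ 0) ∧
    1 / 2 ≤ (indepPolyOn G lam (unexplored P) /
      indepPolyOn G lam (unexplored P \ nbd G {x})).re := by
  have hu_notMem : u ∉ unexplored P := fun h => (mem_unexplored.1 h).1 P.start_mem_support
  have hratio := hG.half_le_re_indepPolyOn_div hsimp (fun s hs => hcard s fun h => hu_notMem (hs h))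
    (fun v hv => hlam v (ne_of_mem_of_not_mem hv hu_notMem))
    (hG.isSimplicialCliqueIn_unexplored hu P)
  rw [← unexplored_sdiff_nbd] at hratio
  exact ⟨ne_zero_of_half_le_re_div hratio, hratio⟩

end Walk

/-- let `G` be finite, claw-free, with largest clique of size at
most `k` and a simplicial clique in every component; let `K` be a simplicial
clique of `G` and `P` a path in `G + u_K` from `u_K` to its active endpoint
`x`.  With `A_{Px} = V(P) ∪ ∂(V(P) ∖ {x})` and `U_{Px}` its complement, if all
weights lie in `R(k)` then `Z(U_{Px}) ≠ 0`, `Z(U_{Px} ∖ ∂x) ≠ 0` and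
`Re(Z(U_{Px}) / Z(U_{Px} ∖ ∂x)) ≥ 1/2`. -/
theorem stmt9 {V : Type} [Fintype V] (k : ℕ) (hk : 1 ≤ k) (G : SimpleGraph V)
    (hclaw : IsEmpty (subdividedClaw 1 ↪g G))
    (hclique : ∀ s : Finset V, G.IsClique (s : Set V) → s.card ≤ k)
    (hsimp : EveryComponentHasSimplicialClique G)
    (K : Set V) (hKne : K.Nonempty) (hK : IsSimplicialClique G K)
    (x : Option V) (P : (addVertex G K).Walk none x) (hP : P.IsPath)
    (lam : V → ℂ) (hlam : ∀ v, lam v ∈ parabR k) :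
    (indepPolyOn (addVertex G K) (fun w => w.elim 0 lam)
        (Finset.univ \ (P.support.toFinset ∪
          nbd (addVertex G K) (P.support.toFinset \ {x}))) ≠ 0 ∧
      indepPolyOn (addVertex G K) (fun w => w.elim 0 lam)
        ((Finset.univ \ (P.support.toFinset ∪
          nbd (addVertex G K) (P.support.toFinset \ {x}))) \
            nbd (addVertex G K) {x}) ≠ 0) ∧
    1 / 2 ≤ (indepPolyOn (addVertex G K) (fun w => w.elim 0 lam)
        (Finset.univ \ (P.support.toFinset ∪
          nbd (addVertex G K) (P.support.toFinset \ {x}))) /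
      indepPolyOn (addVertex G K) (fun w => w.elim 0 lam)
        ((Finset.univ \ (P.support.toFinset ∪
          nbd (addVertex G K) (P.support.toFinset \ {x}))) \
            nbd (addVertex G K) {x})).re := by
  have hlam' : ∀ w ≠ none, Option.elim w 0 lam ∈ parabR k :=
    Option.forall.2 ⟨fun h => absurd rfl h, fun v _ => hlam v⟩
  have h := stmt9_general (isClawFree_addVertex (isClawFree_of_isEmpty_embedding hclaw) hK)
    (everyComponentHasSimplicialClique_addVertex hsimp hK.1)
    (isClique_addVertex_neighborSet_none hK.1)
    (fun _ => card_le_of_isClique_addVertex hclique) hlam' P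
  unfold unexplored at h
  -- The two sides differ in the decidability instance for equality on `Option V`.
  convert h
end
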